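/- arXiv:1807.10743 — 13 statements merged into one kernel-verified Lean document; each statement's English description precedes it below -/
import Mathlib

section
/- Let m ≥ 1 and let R be a commutative ring in which (m−1)! is invertible. If B ∈ Mat_m(R) has characteristic polynomial (X−1)^m, then the truncated logarithm log(B) = ∑_{i=1}^{m−1} (−1)^{i+1} (B−1)^i/i has characteristic polynomial X^m. -/
open Polynomial

/-- The truncated logarithm of a matrix: `log(B) = ∑_{i=1}^{m-1} (-1)^{i+1} (B-1)^i / i`. -/
noncomputable def truncLog {R : Type*} [CommRing R] {m : ℕ}
    (B : Matrix (Fin m) (Fin m) R) : Matrix (Fin m) (Fin m) R :=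
  ∑ i ∈ Finset.Ico 1 m, ((-1 : R) ^ (i + 1) * Ring.inverse ((i : R))) • (B - 1) ^ i

lemma det_aeval_of_splits {S : Type*} [CommRing S] {m : ℕ}
    (N : Matrix (Fin m) (Fin m) S) (hN : N.charpoly = X ^ m) (q : S[X]) (hq : q.Splits) :
    (aeval N q).det = (q.eval 0) ^ m := by
  induction hq using Submonoid.closure_induction with
  | mem x hx =>
    rcases hx with ⟨a, rfl⟩ | ⟨a, rfl⟩
    · simp [Matrix.algebraMap_eq_diagonal]
    · have h := Matrix.eval_charpoly N (-a)
      rw [hN] at h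
      have h2 : aeval N (X + C a) = -(Matrix.scalar (Fin m) (-a) - N) := by
        simp [Matrix.algebraMap_eq_diagonal, Matrix.scalar_apply]
        ext i j
        by_cases hij : i = j <;> simp [hij, add_comm]
      rw [h2, Matrix.det_neg, ← h]
      simp [← mul_pow]
  | one => simp
  | mul x y _ _ hx hy => simp [hx, hy, mul_pow]

lemma det_aeval_of_monic {S : Type*} [CommRing S] {m : ℕ}
    (N : Matrix (Fin m) (Fin m) S) (hN : N.charpoly = X ^ m) (q : S[X]) (hq : q.Monic) :
    (aeval N q).det = (q.eval 0) ^ m := by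
  nontriviality S
  obtain ⟨T, _, _, _, _, _, hT⟩ := hq.exists_splits_map
  have inj : Function.Injective (algebraMap S T) := FaithfulSMul.algebraMap_injective S T
  apply inj
  have h := det_aeval_of_splits (N.map (algebraMap S T))
    (by rw [Matrix.charpoly_map, hN]; simp) _ hT
  have e : aeval (N.map (algebraMap S T)) (q.map (algebraMap S T))
      = (aeval N q).map (algebraMap S T) := by
    rw [aeval_map_algebraMap]
    exact aeval_algHom_apply (Algebra.ofId S T).mapMatrix N q
  rw [e] at h
  rw [RingHom.map_det, RingHom.mapMatrix_apply, h, map_pow]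
  rw [← coeff_zero_eq_eval_zero, ← coeff_zero_eq_eval_zero, coeff_map]

lemma charpoly_aeval_of_charpoly {R : Type*} [CommRing R] {m : ℕ} (hm : 1 ≤ m)
    (N : Matrix (Fin m) (Fin m) R) (hN : N.charpoly = X ^ m) (p : R[X])
    (hp : p.degree < m) (hp0 : p.eval 0 = 0) :
    (aeval N p).charpoly = X ^ m := by
  nontriviality R
  have hNm : N ^ m = 0 := by simpa [hN] using N.aeval_self_charpoly
  have hN' : (N.map (C : R →+* R[X])).charpoly = X ^ m := by
    rw [Matrix.charpoly_map, hN]; simp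
  have hq : (X ^ m + (C X - p.map C) : R[X][X]).Monic := by
    apply monic_X_pow_add
    refine lt_of_le_of_lt (degree_sub_le _ _) (max_lt ?_ ?_)
    · exact lt_of_le_of_lt degree_C_le (by exact_mod_cast hm)
    · exact lt_of_le_of_lt degree_map_le hp
  have h := det_aeval_of_monic _ hN' _ hq
  have e : aeval (N.map (C : R →+* R[X])) (p.map C) = (aeval N p).map C := by
    have := aeval_algHom_apply (Algebra.ofId R R[X]).mapMatrix N p
    rw [← algebraMap_eq, aeval_map_algebraMap]
    exact this
  have e2 : (N.map (C : R →+* R[X])) ^ m = 0 := by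
    rw [← RingHom.mapMatrix_apply, ← map_pow, hNm, map_zero]
  have hp0' : (p.map C).eval 0 = (0 : R[X]) := by
    rw [← coeff_zero_eq_eval_zero, coeff_map, coeff_zero_eq_eval_zero, hp0, map_zero]
  rw [map_add, map_sub, e, map_pow, aeval_X, e2, zero_add, aeval_C, eval_add, eval_sub, hp0',
    eval_pow, eval_X, zero_pow (by omega), eval_C, zero_add, sub_zero] at h
  rw [← h]
  rfl

/-- Let `m ≥ 1` and let `R` be a commutative ring in which `(m−1)!` is invertible.
If `B ∈ Mat_m(R)` has characteristic polynomial `(X−1)^m`, then the truncated logarithm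
`log(B) = ∑_{i=1}^{m−1} (−1)^{i+1} (B−1)^i/i` has characteristic polynomial `X^m`. -/
theorem charpoly_truncLog {R : Type*} [CommRing R] {m : ℕ} (hm : 1 ≤ m)
    (hfac : IsUnit (((m - 1).factorial : R)))
    (B : Matrix (Fin m) (Fin m) R) (hB : B.charpoly = (X - 1) ^ m) :
    (truncLog B).charpoly = X ^ m := by
  have hN : (B - 1).charpoly = X ^ m := by
    have := Matrix.charpoly_sub_scalar B 1
    rw [hB] at this
    simpa using this
  have key := charpoly_aeval_of_charpoly hm (B - 1) hN
    (∑ i ∈ Finset.Ico 1 m, C ((-1 : R) ^ (i + 1) * Ring.inverse ((i : R))) * X ^ i) ?_ ?_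
  · rw [← key, truncLog, map_sum]
    congr 1
    refine Finset.sum_congr rfl fun i _ => ?_
    rw [map_mul, aeval_C, map_pow, aeval_X, Algebra.smul_def]
  · refine lt_of_le_of_lt (degree_sum_le _ _) ?_
    refine (Finset.sup_lt_iff (WithBot.bot_lt_coe m)).mpr ?_
    intro i hi
    refine lt_of_le_of_lt (degree_C_mul_X_pow_le _ _) ?_
    exact WithBot.coe_lt_coe.mpr (Finset.mem_Ico.mp hi).2
  · rw [eval_finsetSum]
    refine Finset.sum_eq_zero fun i hi => ?_
    have := (Finset.mem_Ico.mp hi).1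
    rw [eval_mul, eval_pow, eval_X, zero_pow (by omega), mul_zero]
end

section
/- Let m ≥ 1 and let R be a commutative ring in which (m−1)! is invertible. If A ∈ Mat_m(R) has characteristic polynomial X^m, then log(exp(A)) = A, where exp and log denote the truncated exponential and logarithm. -/
open Polynomial

/-- The truncated exponential of a matrix: `exp(A) = ∑_{i=0}^{m-1} A^i / i!`. -/
noncomputable def truncExp {R : Type*} [CommRing R] {m : ℕ}
    (A : Matrix (Fin m) (Fin m) R) : Matrix (Fin m) (Fin m) R :=
  ∑ i ∈ Finset.range m, (Ring.inverse ((i.factorial : R))) • A ^ i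

section aux
variable {R : Type*} [CommRing R]

lemma aux_unit_fac {k n : ℕ} (h : IsUnit ((k.factorial : R))) (hn : n ≤ k) :
    IsUnit ((n.factorial : R)) :=
  isUnit_of_dvd_unit (Nat.cast_dvd_cast (Nat.factorial_dvd_factorial hn)) h

lemma aux_unit {k n : ℕ} (h : IsUnit ((k.factorial : R))) (h1 : 1 ≤ n) (hn : n ≤ k) :
    IsUnit ((n : R)) :=
  isUnit_of_dvd_unit (Nat.cast_dvd_cast (Nat.dvd_factorial h1 hn)) h

/-- truncated exponential polynomial -/
noncomputable def auxE (R : Type*) [CommRing R] (m : ℕ) : R[X] :=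
  ∑ i ∈ Finset.range m, C (Ring.inverse ((i.factorial : R))) * X ^ i

lemma auxE_deriv {k : ℕ} (h : IsUnit ((k.factorial : R))) :
    derivative (auxE R (k + 1)) = auxE R k := by
  unfold auxE
  rw [Finset.sum_range_succ', derivative_add, derivative_sum]
  simp only [pow_zero, mul_one, derivative_C, add_zero]
  refine Finset.sum_congr rfl fun i hi => ?_
  have hi : i + 1 ≤ k := by simpa using hi
  rw [derivative_C_mul_X_pow, C_mul_X_pow_eq_monomial, C_mul_X_pow_eq_monomial, Nat.add_sub_cancel]
  congr 1
  have h1 := aux_unit_fac h hi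
  have h2 := aux_unit_fac h (n := i) (by omega)
  have h3 := Ring.inverse_mul_cancel _ h1
  have h4 := Ring.mul_inverse_cancel _ h2
  rw [Nat.factorial_succ] at h3 ⊢
  push_cast at h3 ⊢
  linear_combination Ring.inverse (i.factorial : R) * h3 -
    Ring.inverse (((i : R) + 1) * (i.factorial : R)) * ((i : R) + 1) * h4

/-- logarithm of the truncated exponential, as a polynomial -/
noncomputable def auxF (R : Type*) [CommRing R] (k : ℕ) : R[X] :=
  ∑ i ∈ Finset.range k, C ((-1 : R) ^ (i + 2) * Ring.inverse (((i + 1 : ℕ) : R))) *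
    (auxE R (k + 1) - 1) ^ (i + 1)

lemma auxE_sub_one (k : ℕ) : X ∣ auxE R (k + 1) - 1 := by
  rw [X_dvd_iff]
  unfold auxE
  rw [Finset.sum_range_succ']
  simp

lemma auxF_deriv {k : ℕ} (h : IsUnit ((k.factorial : R))) :
    derivative (auxF R k) =
      (∑ i ∈ Finset.range k, (1 - auxE R (k + 1)) ^ i) * auxE R k := by
  unfold auxF
  rw [derivative_sum, Finset.sum_mul]
  refine Finset.sum_congr rfl fun i hi => ?_
  have hi : i + 1 ≤ k := by simpa using hi
  rw [derivative_C_mul, derivative_pow, derivative_sub, auxE_deriv h, derivative_one, sub_zero,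
    Nat.add_sub_cancel]
  have h1 := congrArg (C : R → R[X]) (Ring.inverse_mul_cancel _ (aux_unit h (by omega) hi))
  rw [C_mul, C_1] at h1
  have h2 : (1 - auxE R (k + 1)) ^ i = (-1) ^ i * (auxE R (k + 1) - 1) ^ i := by
    rw [← mul_pow]; congr 1; ring
  rw [h2]
  simp only [C_mul, C_pow, C_neg, C_1]
  linear_combination ((-1) ^ i * (auxE R (k + 1) - 1) ^ i * auxE R k) * h1

lemma auxF_dvd {k : ℕ} (h : IsUnit ((k.factorial : R))) : X ^ (k + 1) ∣ auxF R k - X := by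
  have hd : X ^ k ∣ derivative (auxF R k - X) := by
    have hE : auxE R k = auxE R (k + 1) - C (Ring.inverse ((k.factorial : R))) * X ^ k := by
      unfold auxE; rw [Finset.sum_range_succ]; ring
    have hg := geom_sum_mul (1 - auxE R (k + 1)) k
    obtain ⟨q, hq⟩ := auxE_sub_one (R := R) k
    have h3 : (1 - auxE R (k + 1)) ^ k = X ^ k * (-q) ^ k := by
      rw [← mul_pow]; congr 1; linear_combination -hq
    rw [derivative_sub, derivative_X, auxF_deriv h, hE]
    rw [h3] at hg
    refine ⟨-(-q) ^ k - C (Ring.inverse ((k.factorial : R))) *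
      ∑ i ∈ Finset.range k, (1 - auxE R (k + 1)) ^ i, ?_⟩
    linear_combination -hg
  rw [X_pow_dvd_iff] at hd ⊢
  intro d hdk
  rcases d with _ | d
  · rw [coeff_sub, coeff_X_zero, sub_zero, ← X_dvd_iff]
    refine Finset.dvd_sum fun i _ => Dvd.dvd.mul_left ?_ _
    exact dvd_pow (auxE_sub_one k) (by omega)
  · have h1 := hd d (by omega)
    rw [coeff_derivative] at h1
    have hu := aux_unit h (n := d + 1) (by omega) (by omega)
    push_cast at hu
    exact (hu.mul_left_eq_zero).1 h1

end aux

/-- Let `m ≥ 1` and let `R` be a commutative ring in which `(m−1)!` is invertible.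
If `A ∈ Mat_m(R)` has characteristic polynomial `X^m`, then `log(exp(A)) = A`, where
`exp` and `log` denote the truncated exponential and logarithm. -/
theorem truncLog_truncExp {R : Type*} [CommRing R] {m : ℕ} (hm : 1 ≤ m)
    (hfac : IsUnit (((m - 1).factorial : R)))
    (A : Matrix (Fin m) (Fin m) R) (hA : A.charpoly = X ^ m) :
    truncLog (truncExp A) = A := by
  obtain ⟨k, rfl⟩ : ∃ k, m = k + 1 := ⟨m - 1, by omega⟩
  rw [Nat.add_sub_cancel] at hfac
  have hp : A ^ (k + 1) = 0 := by
    have := A.aeval_self_charpoly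
    rwa [hA, map_pow, aeval_X] at this
  have hE : aeval A (auxE R (k + 1)) = truncExp A := by
    simp [auxE, truncExp, map_sum, Algebra.smul_def]
  have hF : aeval A (auxF R k) = truncLog (truncExp A) := by
    unfold auxF truncLog
    rw [Finset.sum_Ico_eq_sum_range, Nat.add_sub_cancel, map_sum]
    refine Finset.sum_congr rfl fun i _ => ?_
    rw [map_mul, aeval_C, map_pow, map_sub, hE, map_one, ← Algebra.smul_def, add_comm 1 i]
  obtain ⟨q, hq⟩ := auxF_dvd hfac
  have := congrArg (aeval A) hq
  rw [map_sub, hF, map_mul, map_pow, aeval_X, hp, zero_mul] at this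
  exact sub_eq_zero.1 this
end

section
/- Let m ≥ 1 and let R be a commutative ring in which (m−1)! is invertible. If B ∈ Mat_m(R) has characteristic polynomial (X−1)^m, then exp(log(B)) = B, where exp and log denote the truncated exponential and logarithm. -/
open Polynomial

theorem isUnit_fac_of_le {R : Type*} [CommRing R] {n k : ℕ}
    (h : IsUnit ((n.factorial : R))) (hk : k ≤ n) : IsUnit ((k.factorial : R)) :=
  isUnit_of_dvd_unit (by exact_mod_cast Nat.cast_dvd_cast (Nat.factorial_dvd_factorial hk)) h

theorem isUnit_nat_of_le {R : Type*} [CommRing R] {n k : ℕ}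
    (h : IsUnit ((n.factorial : R))) (hk : k + 1 ≤ n) : IsUnit (((k + 1 : ℕ) : R)) :=
  isUnit_of_dvd_unit
    (by exact_mod_cast Nat.cast_dvd_cast (Nat.dvd_factorial (Nat.succ_pos k) hk)) h

theorem inv_fac_succ {R : Type*} [CommRing R] {n k : ℕ}
    (h : IsUnit ((n.factorial : R))) (hk : k + 1 ≤ n) :
    Ring.inverse (((k + 1).factorial : R)) * ((k : R) + 1) = Ring.inverse ((k.factorial : R)) := by
  have h1 := Ring.inverse_mul_cancel _ (isUnit_fac_of_le h hk)
  have h2 := Ring.mul_inverse_cancel _ (isUnit_fac_of_le h (Nat.le_of_succ_le hk))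
  rw [Nat.factorial_succ] at h1 ⊢
  push_cast at h1 ⊢
  linear_combination (-Ring.inverse (((k : R) + 1) * (k.factorial : R)) * ((k : R) + 1)) * h2
    + Ring.inverse ((k.factorial : R)) * h1

theorem poly_exp_log {R : Type*} [CommRing R] (n : ℕ) (h : IsUnit ((n.factorial : R)))
    (L F : R[X])
    (hL : L = ∑ i ∈ Finset.range n,
      C ((-1 : R) ^ (i + 1 + 1) * Ring.inverse (((i + 1 : ℕ) : R))) * X ^ (i + 1))
    (hF : F = ∑ i ∈ Finset.range (n + 1), C (Ring.inverse ((i.factorial : R))) * L ^ i) :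
    X ^ (n + 1) ∣ F - (1 + X) := by
  have hL' : derivative L = ∑ i ∈ Finset.range n, (-X : R[X]) ^ i := by
    rw [hL, derivative_sum]
    refine Finset.sum_congr rfl fun i hi => ?_
    have h1 := Ring.inverse_mul_cancel _ (isUnit_nat_of_le h (Finset.mem_range.mp hi))
    rw [derivative_C_mul_X_pow, mul_assoc, h1, neg_pow (X : R[X])]
    simp [pow_succ]
  have hgeom : (1 + X) * derivative L = 1 - (-X : R[X]) ^ n := by
    rw [hL', ← mul_neg_geom_sum]; ring
  have hXL : (X : R[X]) ∣ L := by
    rw [hL]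
    exact Finset.dvd_sum fun i _ => Dvd.dvd.mul_left (dvd_pow_self _ (Nat.succ_ne_zero i)) _
  set E : R[X] := ∑ i ∈ Finset.range n, C (Ring.inverse ((i.factorial : R))) * L ^ i with hE
  have hFE : F = E + C (Ring.inverse ((n.factorial : R))) * L ^ n := by
    rw [hF, Finset.sum_range_succ]
  have hF' : derivative F = derivative L * E := by
    rw [hF, derivative_sum, Finset.sum_range_succ', hE, Finset.mul_sum]
    simp only [pow_zero, mul_one, derivative_C, add_zero]
    refine Finset.sum_congr rfl fun i hi => ?_
    rw [derivative_C_mul, derivative_pow_succ, ← inv_fac_succ h (Finset.mem_range.mp hi)]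
    simp only [map_mul, map_add, map_one]
    ring
  have hdvd : X ^ n ∣ (1 + X) * derivative (F - (1 + X)) - (F - (1 + X)) := by
    have : (1 + X) * derivative (F - (1 + X)) - (F - (1 + X))
        = -((-X : R[X]) ^ n * E) - C (Ring.inverse ((n.factorial : R))) * L ^ n := by
      simp only [derivative_sub, derivative_add, derivative_one, derivative_X, hF']
      rw [hFE]
      linear_combination E * hgeom
    rw [this]
    refine dvd_sub (dvd_neg.mpr (Dvd.dvd.mul_right ?_ _))
      (Dvd.dvd.mul_left (pow_dvd_pow_of_dvd hXL n) _)
    exact pow_dvd_pow_of_dvd (dvd_neg.mpr dvd_rfl) n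
  have h0 : (F - (1 + X)).coeff 0 = 0 := by
    have hL0 : L.coeff 0 = 0 := X_dvd_iff.mp hXL
    rw [hF, Finset.sum_range_succ']
    simp [coeff_zero_eq_eval_zero, eval_finsetSum] at hL0 ⊢
    simp [hL0]
  generalize F - (1 + X) = G at hdvd h0
  rw [X_pow_dvd_iff] at hdvd ⊢
  intro k
  induction k with
  | zero => intro _; exact h0
  | succ k ih =>
    intro hk
    have hG := ih (by omega)
    have h1 := hdvd k (by omega)
    have h2 : (X * derivative G).coeff k = k * G.coeff k := by
      cases k with
      | zero => simp
      | succ j => rw [coeff_X_mul, coeff_derivative]; push_cast; ring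
    rw [add_mul, one_mul, coeff_sub, coeff_add, h2, coeff_derivative, hG] at h1
    have hu := isUnit_nat_of_le (k := k) h (by omega)
    refine hu.mul_left_eq_zero.mp ?_
    push_cast
    simpa using h1

/-- Let `m ≥ 1` and let `R` be a commutative ring in which `(m−1)!` is invertible.
If `B ∈ Mat_m(R)` has characteristic polynomial `(X−1)^m`, then `exp(log(B)) = B`, where
`exp` and `log` denote the truncated exponential and logarithm. -/
theorem truncExp_truncLog {R : Type*} [CommRing R] {m : ℕ} (hm : 1 ≤ m)
    (hfac : IsUnit (((m - 1).factorial : R)))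
    (B : Matrix (Fin m) (Fin m) R) (hB : B.charpoly = (X - 1) ^ m) :
    truncExp (truncLog B) = B := by
  obtain ⟨n, rfl⟩ : ∃ n, m = n + 1 := ⟨m - 1, by omega⟩
  rw [Nat.add_sub_cancel] at hfac
  have hnil : (B - 1) ^ (n + 1) = 0 := by
    have := B.aeval_self_charpoly
    rw [hB] at this
    simpa using this
  obtain ⟨Q, hQ⟩ := poly_exp_log n hfac _ _ rfl rfl
  have key := congrArg (aeval (B - 1)) hQ
  rw [map_mul, map_pow, aeval_X, hnil, zero_mul, map_sub, sub_eq_zero] at key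
  simp only [map_add, map_one, aeval_X, add_sub_cancel] at key
  refine Eq.trans ?_ key
  unfold truncExp truncLog
  rw [Finset.sum_Ico_eq_sum_range]
  simp only [map_sum, map_mul, map_pow, aeval_C, aeval_X, Algebra.smul_def, Nat.add_sub_cancel,
    add_comm 1]
end

section
/- Let m ≥ 1 and let R be a commutative ring in which (m−1)! is invertible. If A ∈ Mat_m(R) has characteristic polynomial X^m, then for every natural number q one has exp(q·A) = exp(A)^q, where exp denotes the truncated exponential. -/
open Polynomial

theorem sum_mul_sum_of_pow_eq_zero {R S : Type*} [CommRing R] [Ring S] [Algebra R S] (m : ℕ)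
    (A : S) (hA : A ^ m = 0) (f g : ℕ → R) :
    (∑ i ∈ Finset.range m, f i • A ^ i) * (∑ i ∈ Finset.range m, g i • A ^ i) =
    ∑ n ∈ Finset.range m, (∑ p ∈ Finset.HasAntidiagonal.antidiagonal n, f p.1 * g p.2) • A ^ n := by
  rw [Finset.sum_mul_sum, ← Finset.sum_product']
  have h1 : ∀ p ∈ Finset.range m ×ˢ Finset.range m,
      (f p.1 • A ^ p.1) * (g p.2 • A ^ p.2) ≠ 0 → p.1 + p.2 < m := by
    intro p _ h
    by_contra hlt
    apply h
    rw [smul_mul_smul_comm, ← pow_add, pow_eq_zero_of_le (not_lt.mp hlt) hA, smul_zero]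
  rw [← Finset.sum_filter_of_ne h1,
    ← Finset.sum_fiberwise_of_maps_to (t := Finset.range m) (g := fun p : ℕ × ℕ => p.1 + p.2)
      (by intro p hp; simp at hp ⊢; exact hp.2)]
  refine Finset.sum_congr rfl fun n hn => ?_
  rw [Finset.sum_smul]
  have h2 : Finset.filter (fun p : ℕ × ℕ => p.1 + p.2 = n)
      (Finset.filter (fun p : ℕ × ℕ => p.1 + p.2 < m) (Finset.range m ×ˢ Finset.range m))
      = Finset.HasAntidiagonal.antidiagonal n := by
    ext p
    simp at hn ⊢
    omega
  rw [h2]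
  refine Finset.sum_congr rfl fun p hp => ?_
  rw [smul_mul_smul_comm, ← pow_add, Finset.HasAntidiagonal.mem_antidiagonal.mp hp]

/-- Let `m ≥ 1` and let `R` be a commutative ring in which `(m−1)!` is invertible.
If `A ∈ Mat_m(R)` has characteristic polynomial `X^m`, then for every natural number `q`
one has `exp(q·A) = exp(A)^q`, where `exp` denotes the truncated exponential. -/
theorem truncExp_nsmul {R : Type*} [CommRing R] {m : ℕ} (hm : 1 ≤ m)
    (hfac : IsUnit (((m - 1).factorial : R)))
    (A : Matrix (Fin m) (Fin m) R) (hA : A.charpoly = X ^ m) (q : ℕ) :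
    truncExp (q • A) = (truncExp A) ^ q := by
  have hA0 : A ^ m = 0 := by
    have := Matrix.aeval_self_charpoly A
    rwa [hA, map_pow, aeval_X] at this
  have hu : ∀ i < m, IsUnit ((i.factorial : R)) := fun i hi =>
    isUnit_of_dvd_unit (Nat.cast_dvd_cast (Nat.factorial_dvd_factorial (by omega))) hfac
  have key : ∀ q : ℕ, truncExp (q • A) =
      ∑ i ∈ Finset.range m, ((q : R) ^ i * Ring.inverse (i.factorial : R)) • A ^ i := by
    intro q
    refine Finset.sum_congr rfl fun i _ => ?_
    rw [← Nat.cast_smul_eq_nsmul R, _root_.smul_pow, smul_smul, mul_comm]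
  induction q with
  | zero =>
    rw [key, pow_zero, Finset.sum_eq_single 0]
    · simp
    · intro i _ hi
      simp [hi]
    · intro h
      simp at h
      omega
  | succ q ih =>
    rw [pow_succ, ← ih, key, key]
    unfold truncExp
    rw [sum_mul_sum_of_pow_eq_zero m A hA0]
    refine Finset.sum_congr rfl fun n hn => ?_
    congr 1
    have hn' := Finset.mem_range.mp hn
    apply (hu n hn').mul_left_cancel
    rw [mul_left_comm, Ring.mul_inverse_cancel _ (hu n hn'), mul_one, Nat.cast_succ,
      (Commute.all (q : R) 1).add_pow', Finset.mul_sum]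
    refine Finset.sum_congr rfl fun p hp => ?_
    have hp' := Finset.HasAntidiagonal.mem_antidiagonal.mp hp
    have e1 := Ring.mul_inverse_cancel _ (hu p.1 (by omega))
    have e2 := Ring.mul_inverse_cancel _ (hu p.2 (by omega))
    have hc : ((n.choose p.1 : ℕ) : R) * (p.1.factorial : R) * (p.2.factorial : R)
        = (n.factorial : R) := by
      rw [← hp']
      have h3 := Nat.add_choose_mul_factorial_mul_factorial p.1 p.2
      rw [← Nat.choose_symm_add] at h3
      exact_mod_cast congrArg (Nat.cast : ℕ → R) h3
    rw [← hc, one_pow, mul_one, nsmul_eq_mul]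
    linear_combination (-(n.choose p.1 : R) * (q : R) ^ p.1) *
      (e1 * ((p.2.factorial : R) * Ring.inverse (p.2.factorial : R)) + e2)
end

section
/- Let m ≥ 1 and let R be a commutative ring in which (m−1)! is invertible. If B ∈ Mat_m(R) has characteristic polynomial (X−1)^m, then for every natural number q the matrix B^q also has characteristic polynomial (X−1)^m and log(B^q) = q·log(B), where log denotes the truncated logarithm. -/
open Polynomial

theorem tl_det_aeval_of_splits {S : Type*} [CommRing S] {m : ℕ}
    (B : Matrix (Fin m) (Fin m) S) (hB : B.charpoly = (X - 1) ^ m) (p : S[X]) (hp : p.Splits) :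
    (aeval B p).det = (eval 1 p) ^ m := by
  unfold Polynomial.Splits at hp
  induction hp using Submonoid.closure_induction with
  | mem x hx =>
    rcases hx with ⟨a, rfl⟩ | ⟨a, rfl⟩
    · simp [Matrix.algebraMap_eq_diagonal]
    · have h := Matrix.eval_charpoly B (-a)
      rw [hB] at h
      have h2 : aeval B (X + C a) = -(Matrix.scalar (Fin m) (-a) - B) := by
        simp [Matrix.algebraMap_eq_diagonal, Matrix.scalar_apply]
        ext i j
        simp [Matrix.diagonal_apply]
        split_ifs <;> ring
      rw [h2, Matrix.det_neg, ← h]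
      simp only [eval_pow, eval_sub, eval_X, eval_one, Fintype.card_fin, eval_add, eval_C]
      rw [← mul_pow]
      congr 1
      ring
  | one => simp
  | mul x y _ _ hx hy => simp [hx, hy, mul_pow]

theorem tl_det_aeval {S : Type*} [CommRing S] {m : ℕ}
    (B : Matrix (Fin m) (Fin m) S) (hB : B.charpoly = (X - 1) ^ m) (p : S[X]) (hp : p.Monic) :
    (aeval B p).det = (eval 1 p) ^ m := by
  nontriviality S
  obtain ⟨T, _, _, _, _, _, hT⟩ := hp.exists_splits_map
  have inj : Function.Injective (algebraMap S T) := FaithfulSMul.algebraMap_injective S T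
  apply inj
  have h := tl_det_aeval_of_splits (B.map (algebraMap S T))
    (by rw [Matrix.charpoly_map, hB]; simp) _ hT
  rw [RingHom.map_det, map_pow]
  have e1 : eval 1 (p.map (algebraMap S T)) = algebraMap S T (eval 1 p) := by
    rw [← map_one (algebraMap S T), eval_map_apply]
  rw [e1] at h
  rw [← h]
  congr 1
  rw [aeval_map_algebraMap]
  exact (aeval_algHom_apply (Algebra.ofId S T).mapMatrix B p).symm

theorem tl_charpoly_pow {R : Type*} [CommRing R] {m : ℕ}
    (B : Matrix (Fin m) (Fin m) R) (hB : B.charpoly = (X - 1) ^ m) (q : ℕ) :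
    (B ^ q).charpoly = (X - 1) ^ m := by
  rcases Nat.eq_zero_or_pos q with rfl | hq
  · simp [Matrix.charpoly_one]
  have h := tl_det_aeval (B.map (C : R →+* R[X]))
    (by rw [Matrix.charpoly_map, hB]; simp) (X ^ q - C (X : R[X])) (monic_X_pow_sub_C _ hq.ne')
  have h2 : aeval (B.map (C : R →+* R[X])) (X ^ q - C (X : R[X])) = -(B ^ q).charmatrix := by
    have h3 : (B ^ q).map (C : R →+* R[X]) = (B.map (C : R →+* R[X])) ^ q :=
      map_pow (C : R →+* R[X]).mapMatrix B q
    simp [Matrix.charmatrix, Matrix.algebraMap_eq_diagonal, Matrix.scalar_apply, h3]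
  rw [h2, Matrix.det_neg] at h
  change _ * (B ^ q).charpoly = _ at h
  have h4 : ((-1 : R[X]) ^ m) * (-1) ^ m = 1 := by rw [← mul_pow]; simp
  calc (B ^ q).charpoly = (-1) ^ m * ((-1) ^ m * (B ^ q).charpoly) := by
        rw [← mul_assoc, h4, one_mul]
    _ = (-1) ^ m * (1 - X) ^ m := by
        rw [Fintype.card_fin] at h
        rw [h]; simp
    _ = (X - 1) ^ m := by rw [← mul_pow]; congr 1; ring

/-- The truncated logarithm as a polynomial in `B - 1`. -/
noncomputable def tlPoly (R : Type*) [CommRing R] (m : ℕ) : R[X] :=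
  ∑ i ∈ Finset.Ico 1 m, C ((-1 : R) ^ (i + 1) * Ring.inverse ((i : R))) * X ^ i

theorem tl_aeval {R : Type*} [CommRing R] {m : ℕ} (B : Matrix (Fin m) (Fin m) R) :
    aeval (B - 1) (tlPoly R m) = truncLog B := by
  simp [tlPoly, truncLog, Algebra.smul_def]

theorem tl_isUnit {R : Type*} [CommRing R] {m : ℕ} (hfac : IsUnit (((m - 1).factorial : R)))
    (i : ℕ) (h1 : 1 ≤ i) (h2 : i < m) : IsUnit (i : R) := by
  apply isUnit_of_dvd_unit _ hfac
  exact_mod_cast Nat.cast_dvd_cast (α := R) (Nat.dvd_factorial h1 (by omega))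

theorem tl_deriv {R : Type*} [CommRing R] {m : ℕ} (hfac : IsUnit (((m - 1).factorial : R))) :
    (1 + X) * derivative (tlPoly R m) = 1 - (-X) ^ (m - 1) := by
  have : derivative (tlPoly R m) = ∑ j ∈ Finset.range (m - 1), (-X : R[X]) ^ j := by
    rw [tlPoly, Finset.sum_Ico_eq_sum_range, derivative_sum]
    apply Finset.sum_congr rfl
    intro j hj
    have hu := tl_isUnit hfac (1 + j) (by omega) (by simp at hj; omega)
    rw [derivative_C_mul_X_pow, mul_assoc, Ring.inverse_mul_cancel _ hu, neg_pow (X : R[X]) j]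
    have : 1 + j - 1 = j := by omega
    rw [this]
    simp [pow_add]
  rw [this]
  have := mul_neg_geom_sum (-X : R[X]) (m - 1)
  rwa [sub_neg_eq_add] at this

theorem tl_dvd {R : Type*} [CommRing R] {m : ℕ} (hm : 1 ≤ m)
    (hfac : IsUnit (((m - 1).factorial : R))) (q : ℕ) :
    X ^ m ∣ (tlPoly R m).comp ((1 + X) ^ q - 1) - (q : R[X]) * tlPoly R m := by
  set Y : R[X] := (1 + X) ^ q - 1 with hY
  set L := tlPoly R m with hL
  have hd := tl_deriv (R := R) (m := m) hfac
  rw [← hL] at hd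
  have hXY : X ∣ Y := by
    rw [X_dvd_iff, coeff_zero_eq_eval_zero]; simp [hY]
  have hdY : (1 + X) * derivative Y = (q : R[X]) * (1 + Y) := by
    rw [hY]
    rcases q with _ | q
    · simp
    · simp [derivative_pow]; ring
  have hcomp : (1 + Y) * (derivative L).comp Y = 1 - (-Y) ^ (m - 1) := by
    have := congrArg (fun p => p.comp Y) hd
    simpa using this
  have hF : X ^ (m - 1) ∣ (1 + X) * derivative (L.comp Y - (q : R[X]) * L) := by
    have : (1 + X) * derivative (L.comp Y - (q : R[X]) * L)
        = (q : R[X]) * ((-X) ^ (m - 1) - (-Y) ^ (m - 1)) := by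
      rw [derivative_sub, derivative_comp, derivative_natCast_mul]
      linear_combination (derivative L).comp Y * hdY + (q : R[X]) * hcomp - (q : R[X]) * hd
    rw [this]
    apply Dvd.dvd.mul_left
    exact dvd_sub (pow_dvd_pow_of_dvd (by simp) _) (pow_dvd_pow_of_dvd (by simpa using hXY) _)
  have hF2 : X ^ (m - 1) ∣ derivative (L.comp Y - (q : R[X]) * L) := by
    refine IsCoprime.dvd_of_dvd_mul_left ?_ hF
    exact IsCoprime.pow_left ⟨-1, 1, by ring⟩
  rw [X_pow_dvd_iff] at hF2 ⊢
  intro d hdm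
  rcases d with _ | d
  · have hL0 : eval 0 L = 0 := by
      rw [hL, tlPoly, eval_finsetSum]
      apply Finset.sum_eq_zero
      intro i hi
      have : i ≠ 0 := by simp at hi; omega
      simp [this]
    rw [coeff_zero_eq_eval_zero, eval_sub, eval_comp, eval_mul]
    simp [hY, hL0]
  · have := hF2 d (by omega)
    rw [coeff_derivative] at this
    have hu := tl_isUnit hfac (d + 1) (by omega) hdm
    push_cast at hu
    exact hu.mul_left_eq_zero.mp this

/-- Let `m ≥ 1` and let `R` be a commutative ring in which `(m−1)!` is invertible.
If `B ∈ Mat_m(R)` has characteristic polynomial `(X−1)^m`, then for every natural number `q`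
the matrix `B^q` also has characteristic polynomial `(X−1)^m` and `log(B^q) = q·log(B)`,
where `log` denotes the truncated logarithm. -/
theorem truncLog_pow {R : Type*} [CommRing R] {m : ℕ} (hm : 1 ≤ m)
    (hfac : IsUnit (((m - 1).factorial : R)))
    (B : Matrix (Fin m) (Fin m) R) (hB : B.charpoly = (X - 1) ^ m) (q : ℕ) :
    (B ^ q).charpoly = (X - 1) ^ m ∧ truncLog (B ^ q) = q • truncLog B := by
  refine ⟨tl_charpoly_pow B hB q, ?_⟩
  have hn : (B - 1) ^ m = 0 := by
    have := Matrix.aeval_self_charpoly B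
    rw [hB] at this
    simpa using this
  obtain ⟨G, hG⟩ := tl_dvd (R := R) hm hfac q
  have := congrArg (aeval (B - 1)) hG
  rw [map_sub, aeval_comp, map_mul, map_mul, map_pow, aeval_X, hn, zero_mul] at this
  have h2 : aeval (B - 1) ((1 + X : R[X]) ^ q - 1) = B ^ q - 1 := by simp
  rw [h2, tl_aeval, tl_aeval, sub_eq_zero] at this
  rw [this]
  simp
end

section
/- Let m ≥ 1, let R be a commutative ring in which (m−1)! is invertible, let J ∈ Mat_m(R) be an invertible matrix, and let A ∈ Mat_m(R) have characteristic polynomial X^m. Set B = exp(A), the truncated exponential. Then Aᵀ J + J A = 0 if and only if Bᵀ J B = J. -/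
open Polynomial

noncomputable def tePoly (R : Type*) [CommRing R] (m : ℕ) : R[X] :=
  ∑ i ∈ Finset.range m, Polynomial.C (Ring.inverse ((i.factorial : R))) * X ^ i

theorem tePoly_coeff {R : Type*} [CommRing R] (m d : ℕ) (hd : d < m) :
    (tePoly R m).coeff d = Ring.inverse ((d.factorial : R)) := by
  unfold tePoly
  rw [Polynomial.finsetSum_coeff]
  simp only [Polynomial.coeff_C_mul_X_pow]
  rw [Finset.sum_ite_eq]
  simp [hd]

theorem truncExp_eq_aeval {R : Type*} [CommRing R] {m : ℕ}
    (A : Matrix (Fin m) (Fin m) R) : truncExp A = aeval A (tePoly R m) := by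
  simp [truncExp, tePoly, Algebra.smul_def]

theorem isUnit_fac {R : Type*} [CommRing R] {m : ℕ}
    (hfac : IsUnit (((m - 1).factorial : R))) (i : ℕ) (hi : i < m) :
    IsUnit ((i.factorial : R)) :=
  isUnit_of_dvd_unit (Nat.cast_dvd_cast (Nat.factorial_dvd_factorial (by omega))) hfac

theorem tePoly_mul {R : Type*} [CommRing R] {m : ℕ}
    (hfac : IsUnit (((m - 1).factorial : R))) :
    X ^ m ∣ (tePoly R m).comp (-X) * tePoly R m - 1 := by
  rw [Polynomial.X_pow_dvd_iff]
  intro d hd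
  have hu := isUnit_fac hfac d hd
  rw [Polynomial.coeff_sub, Polynomial.coeff_mul, Polynomial.coeff_one, sub_eq_zero]
  apply hu.mul_left_cancel
  have h1 := (Commute.all (-1 : R) 1).add_pow' d
  rw [neg_add_cancel] at h1
  rw [Finset.mul_sum]
  have h2 : (d.factorial : R) * (if d = 0 then 1 else 0) = 0 ^ d := by
    rcases Nat.eq_zero_or_pos d with rfl | h
    · simp
    · simp [h.ne']
  rw [h2, h1]
  apply Finset.sum_congr rfl
  rintro ⟨i, j⟩ hij
  rw [Finset.HasAntidiagonal.mem_antidiagonal] at hij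
  simp only at hij
  subst hij
  have hi := isUnit_fac hfac i (by omega)
  have hj := isUnit_fac hfac j (by omega)
  have hneg : ((tePoly R m).comp (-X)).coeff i = (tePoly R m).coeff i * (-1) ^ i := by
    have hX : (-X : R[X]) = Polynomial.C (-1) * X := by simp
    rw [hX, Polynomial.comp_C_mul_X_coeff]
  rw [hneg]
  rw [tePoly_coeff m i (by omega), tePoly_coeff m j (by omega)]
  have h3 : ((i + j).factorial : R) = ((i+j).choose i : R) * (i.factorial : R) * (j.factorial : R) := by
    rw [← Nat.add_choose_mul_factorial_mul_factorial i j]; rw [← Nat.choose_symm_add]; push_cast; rfl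
  have h4 := Ring.mul_inverse_cancel _ hi
  have h5 := Ring.mul_inverse_cancel _ hj
  rw [h3, nsmul_eq_mul, one_pow]
  linear_combination (((i+j).choose i : R) * (-1)^i * (j.factorial : R) * Ring.inverse (j.factorial : R)) * h4 + (((i+j).choose i : R) * (-1)^i) * h5

theorem truncExp_neg_mul {R : Type*} [CommRing R] {m : ℕ}
    (hfac : IsUnit (((m - 1).factorial : R)))
    (A : Matrix (Fin m) (Fin m) R) (hA : A ^ m = 0) :
    truncExp (-A) * truncExp A = 1 := by
  obtain ⟨q, hq⟩ := tePoly_mul hfac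
  have := congrArg (aeval A) hq
  simp only [map_sub, map_mul, map_pow, aeval_X, hA, zero_mul, map_one, aeval_comp, map_neg] at this
  rw [truncExp_eq_aeval, truncExp_eq_aeval]
  exact sub_eq_zero.mp this

theorem tePoly_form {R : Type*} [CommRing R] {m : ℕ} (hm : 2 ≤ m) :
    ∃ h : R[X], tePoly R m - 1 = X * (1 + X * h) := by
  have : X ^ 2 ∣ tePoly R m - 1 - X := by
    rw [Polynomial.X_pow_dvd_iff]
    intro d hd
    interval_cases d
    · simp [tePoly_coeff m 0 (by omega)]
    · simp [tePoly_coeff m 1 (by omega), Polynomial.coeff_one]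
  obtain ⟨h, hh⟩ := this
  exact ⟨h, by linear_combination hh⟩

theorem truncExp_inj {R : Type*} [CommRing R] {m : ℕ} (hm : 1 ≤ m)
    (A D : Matrix (Fin m) (Fin m) R) (hA : A ^ m = 0) (hD : D ^ m = 0)
    (h : truncExp A = truncExp D) : A = D := by
  rcases Nat.lt_or_ge 1 m with hm2 | hm1
  swap
  · obtain rfl : m = 1 := by omega
    rw [pow_one] at hA hD
    rw [hA, hD]
  obtain ⟨g, hg⟩ := tePoly_form (R := R) hm2
  have hf : aeval A (tePoly R m - 1) = aeval D (tePoly R m - 1) := by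
    rw [truncExp_eq_aeval, truncExp_eq_aeval] at h
    simp [h]
  have key : ∀ n k, m ≤ k + n → A ^ k = D ^ k := by
    intro n
    induction n with
    | zero =>
      intro k hk
      rw [pow_eq_zero_of_le (by omega) hA, pow_eq_zero_of_le (by omega) hD]
    | succ n ih =>
      intro k hk
      have hdiv : (1 + X * g) - 1 ∣ (1 + X * g) ^ k - 1 ^ k := sub_dvd_pow_sub_pow _ _ k
      rw [add_sub_cancel_left, one_pow] at hdiv
      obtain ⟨q, hq⟩ := (dvd_mul_right X g).trans hdiv
      have e : (X : R[X]) ^ k = (tePoly R m - 1) ^ k - X ^ (k + 1) * q := by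
        rw [hg, mul_pow, pow_succ]
        linear_combination (-X ^ k) * hq
      have hr : aeval A (X ^ (k + 1) * q) = aeval D (X ^ (k + 1) * q) := by
        rw [Polynomial.aeval_eq_sum_range, Polynomial.aeval_eq_sum_range]
        apply Finset.sum_congr rfl
        intro i _
        rcases Nat.lt_or_ge i (k + 1) with hi | hi
        · have : (X ^ (k + 1) * q).coeff i = 0 :=
            Polynomial.X_pow_dvd_iff.mp (dvd_mul_right _ _) i hi
          rw [this, zero_smul, zero_smul]
        · rw [ih i (by omega)]
      have ea := congrArg (aeval A) e
      have ed := congrArg (aeval D) e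
      rw [map_sub, map_pow, map_pow, aeval_X, hf, hr] at ea
      rw [map_sub, map_pow, map_pow, aeval_X] at ed
      rw [ea, ed]
  simpa using key m 1 (by omega)

theorem truncExp_transpose {R : Type*} [CommRing R] {m : ℕ}
    (A : Matrix (Fin m) (Fin m) R) : (truncExp A).transpose = truncExp A.transpose := by
  simp [truncExp, Matrix.transpose_sum, Matrix.transpose_pow]

theorem truncExp_semiconj {R : Type*} [CommRing R] {m : ℕ}
    (J C D : Matrix (Fin m) (Fin m) R) (h : SemiconjBy J C D) :
    J * truncExp C = truncExp D * J := by
  unfold truncExp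
  rw [Finset.mul_sum, Finset.sum_mul]
  apply Finset.sum_congr rfl
  intro i _
  rw [mul_smul_comm, smul_mul_assoc, (h.pow_right i).eq]

/-- Let `m ≥ 1`, let `R` be a commutative ring in which `(m−1)!` is invertible, let
`J ∈ Mat_m(R)` be an invertible matrix, and let `A ∈ Mat_m(R)` have characteristic
polynomial `X^m`.  Set `B = exp(A)`, the truncated exponential.  Then
`Aᵀ J + J A = 0` if and only if `Bᵀ J B = J`. -/
theorem truncExp_pairing {R : Type*} [CommRing R] {m : ℕ} (hm : 1 ≤ m)
    (hfac : IsUnit (((m - 1).factorial : R)))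
    (J : Matrix (Fin m) (Fin m) R) (hJ : IsUnit J)
    (A : Matrix (Fin m) (Fin m) R) (hA : A.charpoly = X ^ m) :
    A.transpose * J + J * A = 0 ↔
      (truncExp A).transpose * J * (truncExp A) = J := by
  have hAm : A ^ m = 0 := by
    have := Matrix.aeval_self_charpoly A
    rwa [hA, map_pow, aeval_X] at this
  obtain ⟨u, rfl⟩ := hJ
  set J : Matrix (Fin m) (Fin m) R := (u : Matrix (Fin m) (Fin m) R)
  have hs : SemiconjBy J ((↑u⁻¹ : Matrix (Fin m) (Fin m) R) * (A.transpose * J)) A.transpose :=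
    Units.mul_inv_cancel_left u _
  generalize (↑u⁻¹ : Matrix (Fin m) (Fin m) R) * (A.transpose * J) = D at hs
  have canc : ∀ M N : Matrix (Fin m) (Fin m) R, J * M = J * N ↔ M = N :=
    fun M N => Units.mul_right_inj u
  have hDm : D ^ m = 0 := by
    rw [← canc, (hs.pow_right m).eq, ← Matrix.transpose_pow, hAm]
    simp
  have hNm : (-A) ^ m = 0 := by rw [neg_pow, hAm, mul_zero]
  have h1 : truncExp (-A) * truncExp A = 1 := truncExp_neg_mul hfac A hAm
  have h2 : truncExp A * truncExp (-A) = 1 := by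
    simpa using truncExp_neg_mul hfac (-A) hNm
  have c1 : A.transpose * J + J * A = 0 ↔ D = -A := by
    rw [← hs.eq, ← mul_add, ← mul_zero J, canc, add_eq_zero_iff_eq_neg]
  have c2 : (truncExp A).transpose * J * truncExp A = J ↔ truncExp D * truncExp A = 1 := by
    rw [truncExp_transpose, ← truncExp_semiconj J D _ hs, mul_assoc, ← canc (_ * _) 1, mul_one]
  rw [c1, c2]
  constructor
  · rintro rfl
    exact h1
  · intro h
    apply truncExp_inj hm D (-A) hDm hNm
    calc truncExp D = truncExp D * (truncExp A * truncExp (-A)) := by rw [h2, mul_one]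
      _ = truncExp (-A) := by rw [← mul_assoc, h, one_mul]
end

section
/- Let R be a commutative Artinian local ring with maximal ideal 𝔪 and residue field k = R/𝔪, and let Λ be a finite group. Let M and M′ be finitely generated R[Λ]-modules such that the reductions M/𝔪M and M′/𝔪M′ are non-isomorphic simple (irreducible) k[Λ]-modules. Then Hom_{R[Λ]}(M, M′) = 0. -/
section aux

variable {R A : Type*} [CommRing R] [Ring A] [Algebra R A]
variable {M M' : Type*} [AddCommGroup M] [AddCommGroup M'] [Module A M] [Module A M']
  [Module R M'] [IsScalarTower R A M']

/-- The submodule generated by the multiples by elements of an ideal of the base ring. -/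
def auxN (A : Type*) [Ring A] [Algebra R A] (M' : Type*) [AddCommGroup M'] [Module A M']
    [Module R M'] [IsScalarTower R A M'] (I : Ideal R) : Submodule A M' :=
  ⨆ a : I, LinearMap.range ((a : R) • (LinearMap.id : M' →ₗ[A] M'))

lemma smul_mem_auxN (I : Ideal R) {a : R} (ha : a ∈ I) (x : M') : a • x ∈ auxN A M' I := by
  refine Submodule.mem_iSup_of_mem (⟨a, ha⟩ : I) ⟨x, by simp⟩

lemma smul_auxN (I J : Ideal R) {a : R} (ha : a ∈ I) (x : M') (hx : x ∈ auxN A M' J) :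
    a • x ∈ auxN A M' (J * I) := by
  have : auxN A M' J ≤ (auxN A M' (J * I)).comap (a • (LinearMap.id : M' →ₗ[A] M')) := by
    refine iSup_le ?_
    rintro ⟨b, hb⟩ _ ⟨y, rfl⟩
    simp only [Submodule.mem_comap, LinearMap.smul_apply, LinearMap.id_apply, smul_smul]
    exact smul_mem_auxN _ (mul_comm a b ▸ Ideal.mul_mem_mul hb ha) y
  exact this hx

lemma aux_le_comap (I J : Ideal R) (f : M →ₗ[A] M') (hf : ∀ x, f x ∈ auxN A M' J) :
    (I.map (algebraMap R A) • (⊤ : Submodule A M)) ≤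
      LinearMap.ker ((auxN A M' (J * I)).mkQ ∘ₗ f) := by
  rw [LinearMap.ker_comp, Submodule.ker_mkQ, Submodule.smul_le]
  intro r hr x _
  rw [Submodule.mem_comap, map_smul]
  induction hr using Submodule.span_induction generalizing x with
  | mem r hr =>
    obtain ⟨a, ha, rfl⟩ := hr
    rw [algebraMap_smul]
    exact smul_auxN _ _ ha _ (hf x)
  | zero => simp
  | add r s _ _ hr hs => rw [add_smul]; exact add_mem (hr x trivial) (hs x trivial)
  | smul b r _ hr => rw [smul_assoc]; exact Submodule.smul_mem _ _ (hr x trivial)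

lemma range_le_isotypic {S Q : Type*} [AddCommGroup S] [AddCommGroup Q] [Module A S] [Module A Q]
    [IsSimpleModule A S] (g : S →ₗ[A] Q) : LinearMap.range g ≤ isotypicComponent A Q S := by
  obtain h | rfl := g.injective_or_eq_zero
  · exact le_sSup ⟨(LinearEquiv.ofInjective g h).symm⟩
  · simp

lemma aux_step (I J : Ideal R)
    (hM : IsSimpleModule A (M ⧸ (I.map (algebraMap R A) • (⊤ : Submodule A M))))
    (hM' : IsSimpleModule A (M' ⧸ (I.map (algebraMap R A) • (⊤ : Submodule A M'))))
    (hne : IsEmpty ((M ⧸ (I.map (algebraMap R A) • (⊤ : Submodule A M))) ≃ₗ[A]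
      (M' ⧸ (I.map (algebraMap R A) • (⊤ : Submodule A M')))))
    (f : M →ₗ[A] M') (hf : ∀ x, f x ∈ auxN A M' J) (x : M) : f x ∈ auxN A M' (J * I) := by
  set F := Submodule.liftQ _ _ (aux_le_comap I J f hf) with hF
  obtain h | h := F.injective_or_eq_zero
  · exfalso
    have e := LinearEquiv.ofInjective F h
    have : IsSimpleModule A (LinearMap.range F) := IsSimpleModule.congr e.symm
    have hN : auxN A M' J ≤ (isotypicComponent A (M' ⧸ auxN A M' (J * I))
        (M' ⧸ (I.map (algebraMap R A) • (⊤ : Submodule A M')))).comap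
          (auxN A M' (J * I)).mkQ := by
      refine iSup_le ?_
      rintro ⟨b, hb⟩ _ ⟨y, rfl⟩
      have hg := aux_le_comap (A := A) I J (b • (LinearMap.id : M' →ₗ[A] M'))
        (fun x => smul_mem_auxN J hb x)
      exact range_le_isotypic (Submodule.liftQ _ _ hg) ⟨Submodule.Quotient.mk y, rfl⟩
    have hr : LinearMap.range F ≤ isotypicComponent A (M' ⧸ auxN A M' (J * I))
        (M' ⧸ (I.map (algebraMap R A) • (⊤ : Submodule A M'))) := by
      rw [hF, Submodule.range_liftQ]
      rintro _ ⟨y, rfl⟩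
      exact hN (hf y)
    obtain ⟨e'⟩ := isIsotypicOfType_submodule_iff.mp (.isotypicComponent A _ _) _ hr
    exact hne.false (e.trans e')
  · have := LinearMap.congr_fun h (Submodule.Quotient.mk x)
    rw [hF] at this
    simpa using this

end aux


/-- Let `R` be a commutative Artinian local ring with maximal ideal `𝔪` and residue field
`k = R/𝔪`, and let `Λ` be a finite group.  Let `M` and `M′` be finitely generated
`R[Λ]`-modules such that the reductions `M/𝔪M` and `M′/𝔪M′` are non-isomorphic simple
(irreducible) `k[Λ]`-modules.  Then `Hom_{R[Λ]}(M, M′) = 0`. -/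
theorem hom_eq_zero_of_nonisomorphic_simple_reductions
    {R : Type*} [CommRing R] [IsArtinianRing R] [IsLocalRing R]
    {Λ : Type*} [Group Λ] [Finite Λ]
    {M M' : Type*} [AddCommGroup M] [AddCommGroup M']
    [Module (MonoidAlgebra R Λ) M] [Module (MonoidAlgebra R Λ) M']
    [Module.Finite (MonoidAlgebra R Λ) M] [Module.Finite (MonoidAlgebra R Λ) M']
    (hM : IsSimpleModule (MonoidAlgebra R Λ)
      (M ⧸ ((IsLocalRing.maximalIdeal R).map (algebraMap R (MonoidAlgebra R Λ)) •
        (⊤ : Submodule (MonoidAlgebra R Λ) M))))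
    (hM' : IsSimpleModule (MonoidAlgebra R Λ)
      (M' ⧸ ((IsLocalRing.maximalIdeal R).map (algebraMap R (MonoidAlgebra R Λ)) •
        (⊤ : Submodule (MonoidAlgebra R Λ) M'))))
    (hne : IsEmpty
      ((M ⧸ ((IsLocalRing.maximalIdeal R).map (algebraMap R (MonoidAlgebra R Λ)) •
        (⊤ : Submodule (MonoidAlgebra R Λ) M))) ≃ₗ[MonoidAlgebra R Λ]
       (M' ⧸ ((IsLocalRing.maximalIdeal R).map (algebraMap R (MonoidAlgebra R Λ)) •
        (⊤ : Submodule (MonoidAlgebra R Λ) M'))))) :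
    ∀ f : M →ₗ[MonoidAlgebra R Λ] M', f = 0 := by
  intro f
  letI : Module R M' := Module.compHom M' (algebraMap R (MonoidAlgebra R Λ))
  haveI : IsScalarTower R (MonoidAlgebra R Λ) M' := ⟨fun r a x => by
    change (r • a) • x = algebraMap R (MonoidAlgebra R Λ) r • (a • x)
    rw [Algebra.smul_def, mul_smul]⟩
  have key : ∀ n x, f x ∈ auxN (MonoidAlgebra R Λ) M' (IsLocalRing.maximalIdeal R ^ n) := by
    intro n
    induction n with
    | zero =>
      intro x
      have := smul_mem_auxN (A := MonoidAlgebra R Λ) (IsLocalRing.maximalIdeal R ^ 0)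
        (a := 1) (by simp) (f x)
      rwa [one_smul] at this
    | succ n ih =>
      intro x
      rw [pow_succ]
      exact aux_step _ _ hM hM' hne f ih x
  obtain ⟨n, hn⟩ := IsArtinianRing.isNilpotent_jacobson_bot (R := R)
  rw [IsLocalRing.jacobson_eq_maximalIdeal _ bot_ne_top] at hn
  ext x
  have h := key n x
  rw [hn] at h
  have h0 : auxN (MonoidAlgebra R Λ) M' (0 : Ideal R) ≤ ⊥ := by
    refine iSup_le ?_
    rintro ⟨b, hb⟩ _ ⟨y, rfl⟩
    have hb0 : b = 0 := by simpa using hb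
    subst hb0
    simp
  simpa using h0 h
end

section
/- Let k be a field of characteristic p > 0, let R be a commutative Artinian local ring with maximal ideal 𝔪 and residue field k, and let Λ be a finite group with p ∤ |Λ|. Let M be an R[Λ]-module that is finite free as an R-module. Let P₁, …, P_r be R[Λ]-modules, each finite free as an R-module, whose reductions P̄_i = P_i/𝔪P_i are pairwise non-isomorphic absolutely irreducible k[Λ]-modules, and suppose that the reduction M/𝔪M is isomorphic as a k[Λ]-module to a direct sum of copies of the P̄_i. Then the natural evaluation map ⊕_{i=1}^r P_i ⊗_R Hom_{R[Λ]}(P_i, M) → M, sending x ⊗ f to f(x), is an isomorphism of R[Λ]-modules. -/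
open TensorProduct

/-- The evaluation map `P ⊗_O Hom_{A}(P, M) → M`, `p ⊗ f ↦ f(p)`, as an `O`-linear map. -/
noncomputable def evalTensor {O A P M : Type*} [CommRing O] [Ring A] [Algebra O A]
    [AddCommGroup M] [Module A M] [Module O M] [IsScalarTower O A M]
    [AddCommGroup P] [Module A P] [Module O P] [IsScalarTower O A P] :
    (P ⊗[O] (P →ₗ[A] M)) →ₗ[O] M :=
  TensorProduct.lift
    { toFun := fun p =>
        { toFun := fun f => f p
          map_add' := fun _ _ => rfl
          map_smul' := fun _ _ => rfl }
      map_add' := fun p q => LinearMap.ext fun f => f.map_add p q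
      map_smul' := fun c p => LinearMap.ext fun f => f.map_smul_of_tower c p }

/-- The total evaluation map `⊕ᵢ Pᵢ ⊗_O Hom_A(Pᵢ, M) → M`. -/
noncomputable def totalEval {O A M : Type*} [CommRing O] [Ring A] [Algebra O A]
    [AddCommGroup M] [Module A M] [Module O M] [IsScalarTower O A M]
    {r : ℕ} (P : Fin r → Type*) [∀ i, AddCommGroup (P i)]
    [∀ i, Module A (P i)] [∀ i, Module O (P i)] [∀ i, IsScalarTower O A (P i)] :
    (∀ i, (P i ⊗[O] (P i →ₗ[A] M))) →ₗ[O] M :=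
  ∑ i, (evalTensor (O := O) (A := A) (P := P i) (M := M)).comp (LinearMap.proj i)


section Helpers

open IsLocalRing

variable {O A : Type*} [CommRing O] [Ring A] [Algebra O A]

theorem jtop_le {I : Ideal O} {M : Type*} [AddCommGroup M] [Module A M] [Module O M]
    [IsScalarTower O A M] (K : Submodule A M) (h : ∀ c ∈ I, ∀ x : M, c • x ∈ K) :
    I.map (algebraMap O A) • (⊤ : Submodule A M) ≤ K := by
  rw [Submodule.smul_le]
  intro a ha n _
  induction ha using Submodule.span_induction generalizing n with
  | mem x hx =>
    obtain ⟨c, hc, rfl⟩ := hx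
    rw [algebraMap_smul]
    exact h c hc n
  | zero => simp
  | add x y _ _ hx hy => rw [add_smul]; exact K.add_mem (hx n trivial) (hy n trivial)
  | smul b x _ hx => rw [smul_assoc]; exact K.smul_mem _ (hx n trivial)

theorem smul_mem_jtop {I : Ideal O} {M : Type*} [AddCommGroup M] [Module A M] [Module O M]
    [IsScalarTower O A M] {c : O} (hc : c ∈ I) (x : M) :
    c • x ∈ I.map (algebraMap O A) • (⊤ : Submodule A M) := by
  rw [← algebraMap_smul A]
  exact Submodule.smul_mem_smul (Ideal.mem_map_of_mem _ hc) trivial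

theorem jtop_le_range {s : ℕ} (v : Fin s → O) {M : Type*} [AddCommGroup M] [Module A M]
    [Module O M] [IsScalarTower O A M] {x : M}
    (hx : x ∈ (Ideal.span (Set.range v)).map (algebraMap O A) • (⊤ : Submodule A M)) :
    x ∈ LinearMap.range (∑ l, (v l) • (LinearMap.proj l : (Fin s → M) →ₗ[A] M)) := by
  refine jtop_le _ ?_ hx
  intro c hc y
  obtain ⟨d, rfl⟩ := (Submodule.mem_span_range_iff_exists_fun O).1 hc
  refine ⟨fun l => d l • y, ?_⟩
  simp [LinearMap.sum_apply, Finset.sum_smul, smul_smul, mul_comm]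

theorem mem_smul_of_mem_jtop [IsNoetherianRing O] {I : Ideal O} {M : Type*} [AddCommGroup M]
    [Module A M] [Module O M] [IsScalarTower O A M] {x : M}
    (hx : x ∈ I.map (algebraMap O A) • (⊤ : Submodule A M)) :
    x ∈ I • (⊤ : Submodule O M) := by
  obtain ⟨s, v, rfl⟩ := Submodule.fg_iff_exists_fin_generating_family.1
    (IsNoetherian.noetherian I)
  obtain ⟨y, rfl⟩ := jtop_le_range v hx
  simp only [LinearMap.sum_apply, LinearMap.smul_apply, LinearMap.proj_apply]
  exact Submodule.sum_mem _ fun l _ =>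
    Submodule.smul_mem_smul (Submodule.subset_span ⟨l, rfl⟩) trivial

theorem hom_mem_smul [IsNoetherianRing O] {I : Ideal O} {P M : Type*} [AddCommGroup M]
    [Module A M] [Module O M] [IsScalarTower O A M] [AddCommGroup P] [Module A P]
    [Module.Projective A P] (f : P →ₗ[A] M)
    (hf : ∀ x, f x ∈ I.map (algebraMap O A) • (⊤ : Submodule A M)) :
    f ∈ I • (⊤ : Submodule O (P →ₗ[A] M)) := by
  obtain ⟨s, v, rfl⟩ := Submodule.fg_iff_exists_fin_generating_family.1
    (IsNoetherian.noetherian I)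
  set Φ : (Fin s → M) →ₗ[A] M := ∑ l, (v l) • (LinearMap.proj l : (Fin s → M) →ₗ[A] M) with hΦ
  obtain ⟨h, hh⟩ := Module.projective_lifting_property Φ.rangeRestrict
    (f.codRestrict (LinearMap.range Φ) fun x => jtop_le_range v (hf x))
    Φ.surjective_rangeRestrict
  have : f = ∑ l, v l • ((LinearMap.proj l : (Fin s → M) →ₗ[A] M) ∘ₗ h) := by
    ext x
    have := congrArg Subtype.val (LinearMap.congr_fun hh x)
    simp only [LinearMap.comp_apply, LinearMap.codRestrict_apply] at this
    rw [← this]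
    simp [hΦ]
  rw [this]
  exact Submodule.sum_mem _ fun l _ =>
    Submodule.smul_mem_smul (Submodule.subset_span ⟨l, rfl⟩) trivial

theorem surj_of_surj_mod [IsNoetherianRing O] [IsLocalRing O] {N M : Type*} [AddCommGroup M]
    [Module A M] [Module O M] [IsScalarTower O A M] [Module.Finite O M]
    [AddCommGroup N] [Module A N] [Module O N] [IsScalarTower O A N]
    (f : N →ₗ[A] M)
    (hf : ∀ y : M, ∃ x, y - f x ∈ (maximalIdeal O).map (algebraMap O A) • (⊤ : Submodule A M)) :
    Function.Surjective f := by
  have : (⊤ : Submodule O M) ≤ LinearMap.range (f.restrictScalars O) := by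
    refine Submodule.le_of_le_smul_of_le_jacobson_bot (I := maximalIdeal O)
      Module.Finite.fg_top (maximalIdeal_le_jacobson _) ?_
    intro y _
    obtain ⟨x, hx⟩ := hf y
    rw [← add_sub_cancel (f x) y]
    exact Submodule.add_mem_sup ⟨x, rfl⟩ (mem_smul_of_mem_jtop hx)
  intro y
  obtain ⟨x, hx⟩ := this (x := y) trivial
  exact ⟨x, hx⟩

/-- If `|Λ|` is invertible, an `O[Λ]`-module projective over `O` is projective. -/
theorem projective_of_card {Λ : Type*} [Group Λ] [Finite Λ] (hu : IsUnit (Nat.card Λ : O))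
    {P : Type*} [AddCommGroup P] [Module (MonoidAlgebra O Λ) P] [Module O P]
    [IsScalarTower O (MonoidAlgebra O Λ) P] [Module.Projective O P] :
    Module.Projective (MonoidAlgebra O Λ) P := by
  classical
  cases nonempty_fintype Λ
  refine Module.Projective.of_lifting_property'' fun f hf => ?_
  obtain ⟨g, hg⟩ := Module.projective_lifting_property (f.restrictScalars O) LinearMap.id hf
  have hg' : ∀ x, f (g x) = x := fun x => LinearMap.congr_fun hg x
  refine ⟨g.equivariantProjection Λ, ?_⟩
  ext x
  rw [LinearMap.comp_apply, LinearMap.equivariantProjection_apply, LinearMap.map_smul_of_tower,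
    map_sum]
  have : ∀ a : Λ, f (g.conjugate a x) = x := by
    intro a
    rw [LinearMap.conjugate_apply, map_smul, hg', ← mul_smul, MonoidAlgebra.single_mul_single,
      mul_one, inv_mul_cancel, ← MonoidAlgebra.one_def, one_smul]
  simp only [this]
  rw [Finset.sum_const, Finset.card_univ, ← Nat.cast_smul_eq_nsmul O, smul_smul,
    Fintype.card_eq_nat_card, Ring.inverse_mul_cancel _ hu, one_smul, LinearMap.id_apply]

theorem totalEval_apply {M : Type*}
    [AddCommGroup M] [Module A M] [Module O M] [IsScalarTower O A M]
    {r : ℕ} (P : Fin r → Type*) [∀ i, AddCommGroup (P i)]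
    [∀ i, Module A (P i)] [∀ i, Module O (P i)] [∀ i, IsScalarTower O A (P i)]
    (x : ∀ i, (P i ⊗[O] (P i →ₗ[A] M))) :
    totalEval (O := O) (A := A) (M := M) P x = ∑ i, evalTensor (x i) := by
  simp [totalEval, LinearMap.sum_apply]

theorem evalTensor_tmul {P M : Type*}
    [AddCommGroup M] [Module A M] [Module O M] [IsScalarTower O A M]
    [AddCommGroup P] [Module A P] [Module O P] [IsScalarTower O A P] (x : P) (f : P →ₗ[A] M) :
    evalTensor (O := O) (x ⊗ₜ[O] f) = f x := rfl

theorem totalEval_smul {M : Type*}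
    [AddCommGroup M] [Module A M] [Module O M] [IsScalarTower O A M]
    {r : ℕ} (P : Fin r → Type*) [∀ i, AddCommGroup (P i)]
    [∀ i, Module A (P i)] [∀ i, Module O (P i)] [∀ i, IsScalarTower O A (P i)]
    (a : A) (x : ∀ i, (P i ⊗[O] (P i →ₗ[A] M))) :
    totalEval (O := O) (A := A) (M := M) P (a • x) = a • totalEval (O := O) P x := by
  rw [totalEval_apply, totalEval_apply, Finset.smul_sum]
  refine Finset.sum_congr rfl fun i _ => ?_
  rw [Pi.smul_apply]
  induction x i using TensorProduct.induction_on with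
  | zero => simp
  | tmul y f => rw [TensorProduct.smul_tmul', evalTensor_tmul, evalTensor_tmul, map_smul]
  | add y z hy hz => rw [smul_add, map_add, map_add, hy, hz, smul_add]

/-- Core: if `φ : ∏ Pᵢ^{nᵢ} → M` is bijective and its components span each `Hom(Pᵢ, M)`, done. -/
theorem totalEval_bij_of {M : Type*}
    [AddCommGroup M] [Module A M] [Module O M] [IsScalarTower O A M]
    {r : ℕ} (P : Fin r → Type*) [∀ i, AddCommGroup (P i)]
    [∀ i, Module A (P i)] [∀ i, Module O (P i)] [∀ i, IsScalarTower O A (P i)]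
    (n : Fin r → ℕ) (F : ∀ i, Fin (n i) → (P i →ₗ[A] M))
    (hF : Function.Bijective fun x : (∀ i, Fin (n i) → P i) => ∑ i, ∑ j, F i j (x i j))
    (hspan : ∀ i, Submodule.span O (Set.range (F i)) = ⊤) :
    Function.Bijective (totalEval (O := O) (A := A) (M := M) P) := by
  have key : ∀ x : (∀ i, Fin (n i) → P i),
      totalEval (O := O) (A := A) (M := M) P (fun i => ∑ j, x i j ⊗ₜ F i j) =
        ∑ i, ∑ j, F i j (x i j) := by
    intro x
    rw [totalEval_apply]
    simp [map_sum, evalTensor_tmul]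
  have hs : ∀ i (t : P i ⊗[O] (P i →ₗ[A] M)), ∃ x : Fin (n i) → P i, t = ∑ j, x j ⊗ₜ F i j := by
    intro i t
    induction t using TensorProduct.induction_on with
    | zero => exact ⟨0, by simp⟩
    | tmul y f =>
      obtain ⟨c, rfl⟩ := (Submodule.mem_span_range_iff_exists_fun O).1
        ((hspan i).ge (Submodule.mem_top (x := f)))
      exact ⟨fun j => c j • y, by simp [TensorProduct.tmul_sum, TensorProduct.smul_tmul]⟩
    | add a b ha hb =>
      obtain ⟨x, rfl⟩ := ha
      obtain ⟨y, rfl⟩ := hb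
      exact ⟨x + y, by simp [TensorProduct.add_tmul, Finset.sum_add_distrib]⟩
  constructor
  · intro a b hab
    choose x hx using fun i => hs i (a i)
    choose y hy using fun i => hs i (b i)
    have ha := key x
    have hb := key y
    rw [← funext hx] at ha
    rw [← funext hy] at hb
    have : x = y := hF.1 (by simpa using ha.symm.trans (hab.trans hb))
    funext i
    rw [hx, hy, this]
  · intro m
    obtain ⟨x, hx⟩ := hF.2 m
    exact ⟨_, (key x).trans hx⟩

end Helpers

section Helpers2

open IsLocalRing

variable {O A : Type*} [CommRing O] [Ring A] [Algebra O A]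

theorem map_mem_jtop {I : Ideal O} {M N : Type*} [AddCommGroup M] [Module A M] [Module O M]
    [IsScalarTower O A M] [AddCommGroup N] [Module A N] [Module O N]
    [IsScalarTower O A N] (f : M →ₗ[A] N) {x : M}
    (hx : x ∈ I.map (algebraMap O A) • (⊤ : Submodule A M)) :
    f x ∈ I.map (algebraMap O A) • (⊤ : Submodule A N) := by
  have : I.map (algebraMap O A) • (⊤ : Submodule A M) ≤
      (I.map (algebraMap O A) • (⊤ : Submodule A N)).comap f := by
    refine jtop_le _ fun c hc y => ?_
    rw [Submodule.mem_comap, LinearMap.map_smul_of_tower]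
    exact smul_mem_jtop hc _
  exact this hx

theorem jtop_le_ker {I : Ideal O} {M N : Type*} [AddCommGroup M] [Module A M] [Module O M]
    [IsScalarTower O A M] [AddCommGroup N] [Module A N] [Module O N]
    [IsScalarTower O A N]
    (f : M →ₗ[A] (N ⧸ (I.map (algebraMap O A) • (⊤ : Submodule A N)))) :
    I.map (algebraMap O A) • (⊤ : Submodule A M) ≤ LinearMap.ker f := by
  refine jtop_le _ fun c hc y => ?_
  rw [LinearMap.mem_ker, LinearMap.map_smul_of_tower]
  obtain ⟨z, hz⟩ := Submodule.Quotient.mk_surjective _ (f y)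
  rw [← hz, ← Submodule.Quotient.mk_smul, Submodule.Quotient.mk_eq_zero]
  exact smul_mem_jtop hc _

theorem span_hom_eq_top [IsNoetherianRing O] [IsLocalRing O] {P M ι : Type*} [AddCommGroup M]
    [Module A M] [Module O M] [IsScalarTower O A M] [Module.Finite O M] [AddCommGroup P]
    [Module A P] [Module O P] [IsScalarTower O A P] [Module.Finite O P]
    [Module.Projective A P] (F : ι → (P →ₗ[A] M))
    (h : ∀ f : P →ₗ[A] M, ∃ g ∈ Submodule.span O (Set.range F),
      ∀ x, (f - g) x ∈ (maximalIdeal O).map (algebraMap O A) • (⊤ : Submodule A M)) :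
    Submodule.span O (Set.range F) = ⊤ := by
  have hfin : Module.Finite O (P →ₗ[A] M) :=
    Module.Finite.of_injective (LinearMap.restrictScalarsₗ O A P M O)
      (LinearMap.restrictScalars_injective O)
  rw [eq_top_iff]
  refine Submodule.le_of_le_smul_of_le_jacobson_bot (I := maximalIdeal O)
    hfin.fg_top (maximalIdeal_le_jacobson _) ?_
  intro f _
  obtain ⟨g, hg, hfg⟩ := h f
  rw [← add_sub_cancel g f]
  exact Submodule.add_mem_sup hg (hom_mem_smul _ hfg)

theorem main_aux [IsNoetherianRing O] [IsLocalRing O]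
    {M : Type*} [AddCommGroup M] [Module A M]
    [Module O M] [IsScalarTower O A M]
    [Module.Finite O M] [Module.Projective A M]
    {r : ℕ} (P : Fin r → Type*) [∀ i, AddCommGroup (P i)]
    [∀ i, Module A (P i)] [∀ i, Module O (P i)]
    [∀ i, IsScalarTower O A (P i)]
    [∀ i, Module.Finite O (P i)] [∀ i, Module.Projective A (P i)]
    (n : Fin r → ℕ) [Module.Projective A (∀ i, Fin (n i) → P i)]
    (hsimple : ∀ i, IsSimpleModule A
      ((P i) ⧸ ((maximalIdeal O).map (algebraMap O A) • (⊤ : Submodule A (P i)))))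
    (habs : ∀ i, ∀ f : ((P i) ⧸ ((maximalIdeal O).map
          (algebraMap O A) • (⊤ : Submodule A (P i)))) →ₗ[A]
        ((P i) ⧸ ((maximalIdeal O).map (algebraMap O A) • (⊤ : Submodule A (P i)))),
      ∃ c : O, ∀ x, f x = algebraMap O A c • x)
    (hdiff : ∀ i j, i ≠ j → IsEmpty
      (((P i) ⧸ ((maximalIdeal O).map (algebraMap O A) • (⊤ : Submodule A (P i)))) ≃ₗ[A]
       ((P j) ⧸ ((maximalIdeal O).map (algebraMap O A) • (⊤ : Submodule A (P j))))))
    (e : (M ⧸ ((maximalIdeal O).map (algebraMap O A) • (⊤ : Submodule A M))) ≃ₗ[A]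
       (∀ i, Fin (n i) → ((P i) ⧸ ((maximalIdeal O).map
          (algebraMap O A) • (⊤ : Submodule A (P i)))))) :
    Function.Bijective (totalEval (O := O) (A := A) (M := M) P) := by
  classical
  set J := (maximalIdeal O).map (algebraMap O A) with hJ
  let π : (∀ i, Fin (n i) → P i) →ₗ[A]
      (∀ i, Fin (n i) → ((P i) ⧸ (J • (⊤ : Submodule A (P i))))) :=
    LinearMap.pi fun i => LinearMap.pi fun j =>
      (J • (⊤ : Submodule A (P i))).mkQ ∘ₗ LinearMap.proj j ∘ₗ LinearMap.proj i
  have hπa : ∀ x i j, π x i j = Submodule.Quotient.mk (x i j) := fun _ _ _ => rfl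
  have hπ : Function.Surjective π := by
    intro y
    choose x hx using fun i j => Submodule.Quotient.mk_surjective _ (y i j)
    exact ⟨x, funext fun i => funext fun j => hx i j⟩
  have hsum : ∀ x : (∀ i, Fin (n i) → P i), ∑ i, ∑ j,
      (LinearMap.single A (fun i => Fin (n i) → P i) i ∘ₗ
        LinearMap.single A (fun _ : Fin (n i) => P i) j) (x i j) = x := by
    intro x
    refine (Finset.sum_congr rfl fun i _ => ?_).trans (Finset.univ_sum_single x)
    simp only [LinearMap.comp_apply]
    rw [← map_sum]
    exact congrArg (LinearMap.single A (fun i => Fin (n i) → P i) i)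
      (Finset.univ_sum_single (x i))
  have hπk : ∀ x, π x = 0 → x ∈ J • (⊤ : Submodule A (∀ i, Fin (n i) → P i)) := by
    intro x hx
    rw [← hsum x]
    refine Submodule.sum_mem _ fun i _ => Submodule.sum_mem _ fun j _ => map_mem_jtop _ ?_
    rw [← hJ, ← Submodule.Quotient.mk_eq_zero, ← hπa, hx]
    rfl
  obtain ⟨φ, hφ⟩ := Module.projective_lifting_property (J • (⊤ : Submodule A M)).mkQ
    (e.symm.toLinearMap ∘ₗ π) (Submodule.mkQ_surjective _)
  have hφ' : ∀ x, e (Submodule.Quotient.mk (φ x)) = π x := fun x => by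
    have := LinearMap.congr_fun hφ x
    simp only [LinearMap.comp_apply, Submodule.mkQ_apply] at this
    rw [this]; simp
  obtain ⟨ψ, hψ⟩ := Module.projective_lifting_property π
    (e.toLinearMap ∘ₗ (J • (⊤ : Submodule A M)).mkQ) hπ
  have hψ' : ∀ x, π (ψ x) = e (Submodule.Quotient.mk x) := fun x => LinearMap.congr_fun hψ x
  have hφs : Function.Surjective φ := by
    refine surj_of_surj_mod (O := O) φ fun y => ?_
    obtain ⟨x, hx⟩ := hπ (e (Submodule.Quotient.mk y))
    refine ⟨x, ?_⟩
    rw [← hJ, ← Submodule.Quotient.eq]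
    apply e.injective
    rw [hφ', hx]
  have hψs : Function.Surjective ψ := by
    refine surj_of_surj_mod (O := O) ψ fun y => ?_
    obtain ⟨x, hx⟩ := Submodule.Quotient.mk_surjective _ (e.symm (π y))
    refine ⟨x, hπk _ ?_⟩
    rw [map_sub, hψ', hx]
    simp
  have hφi : Function.Injective φ := by
    have h1 : Function.Surjective ((ψ ∘ₗ φ).restrictScalars O) := hψs.comp hφs
    have h2 := OrzechProperty.injective_of_surjective_endomorphism _ h1
    exact Function.Injective.of_comp (f := ψ) h2
  let F : ∀ i, Fin (n i) → (P i →ₗ[A] M) := fun i j =>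
    φ ∘ₗ LinearMap.single A (fun i => Fin (n i) → P i) i ∘ₗ
        LinearMap.single A (fun _ : Fin (n i) => P i) j
  refine totalEval_bij_of P n F ?_ ?_
  · have : (fun x : (∀ i, Fin (n i) → P i) => ∑ i, ∑ j, F i j (x i j)) = φ := by
      funext x
      conv_rhs => rw [← hsum x]
      simp only [map_sum]
      rfl
    rw [this]
    exact ⟨hφi, hφs⟩
  · intro i
    refine span_hom_eq_top _ fun f => ?_
    have hcomp : ∀ i' (j' : Fin (n i')),
        ∃ g : ((P i) ⧸ (J • (⊤ : Submodule A (P i)))) →ₗ[A]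
          ((P i') ⧸ (J • (⊤ : Submodule A (P i')))),
        ∀ x, e (Submodule.Quotient.mk (f x)) i' j' = g (Submodule.Quotient.mk x) := by
      intro i' j'
      let h : P i →ₗ[A] ((P i') ⧸ (J • (⊤ : Submodule A (P i')))) :=
        LinearMap.proj j' ∘ₗ LinearMap.proj i' ∘ₗ e.toLinearMap ∘ₗ
          (J • (⊤ : Submodule A M)).mkQ ∘ₗ f
      exact ⟨Submodule.liftQ _ h (jtop_le_ker h), fun x => rfl⟩
    have hc : ∀ j : Fin (n i), ∃ c : O, ∀ x,
        e (Submodule.Quotient.mk (f x)) i j = c • Submodule.Quotient.mk x := by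
      intro j
      obtain ⟨g, hg⟩ := hcomp i j
      obtain ⟨c, hc⟩ := habs i g
      exact ⟨c, fun x => by rw [hg, hc, algebraMap_smul]⟩
    choose c hc using hc
    have h0 : ∀ i', i' ≠ i → ∀ (j' : Fin (n i')) x,
        e (Submodule.Quotient.mk (f x)) i' j' = 0 := by
      intro i' hi j' x
      obtain ⟨g, hg⟩ := hcomp i' j'
      have := hsimple i
      have := hsimple i'
      rcases LinearMap.bijective_or_eq_zero g with hb | hb
      · exact ((hdiff i i' hi.symm).false (LinearEquiv.ofBijective g hb)).elim
      · rw [hg, hb]; rfl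
    refine ⟨∑ j, c j • F i j, Submodule.sum_mem _ fun j _ =>
      Submodule.smul_mem _ _ (Submodule.subset_span ⟨j, rfl⟩), fun x => ?_⟩
    rw [← hJ, LinearMap.sub_apply, ← Submodule.Quotient.eq]
    apply e.injective
    have hval : (∑ j, c j • F i j) x = φ (Pi.single i fun j => c j • x) := by
      rw [← Finset.univ_sum_single (fun j => c j • x), ← LinearMap.coe_single A, map_sum, map_sum,
        LinearMap.sum_apply]
      refine Finset.sum_congr rfl fun j _ => ?_
      rw [LinearMap.smul_apply, ← LinearMap.map_smul_of_tower]
      rfl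
    rw [hval, hφ']
    funext i' j'
    rw [hπa]
    by_cases hi : i' = i
    · subst hi
      rw [hc, Pi.single_eq_same, Submodule.Quotient.mk_smul]
    · rw [h0 i' hi, Pi.single_eq_of_ne hi]
      rfl

end Helpers2

/-- Let `k` be a field of characteristic `p > 0`, let `O` be a commutative Noetherian local
ring with maximal ideal `𝔪` and residue field `k`, and let `Λ` be a finite group with
`p ∤ |Λ|`.  Let `M` be an `O[Λ]`-module that is finite free as an `O`-module.  Let
`P₁, …, P_r` be `O[Λ]`-modules, each finite free as an `O`-module, whose reductions
`P̄ᵢ = Pᵢ/𝔪Pᵢ` are pairwise non-isomorphic absolutely irreducible `k[Λ]`-modules, and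
suppose that the reduction `M/𝔪M` is isomorphic as a `k[Λ]`-module to a direct sum of
copies of the `P̄ᵢ`.  Then the natural evaluation map
`⊕ᵢ Pᵢ ⊗_O Hom_{O[Λ]}(Pᵢ, M) → M`, `x ⊗ f ↦ f(x)`, is an isomorphism of
`O[Λ]`-modules. -/
theorem totalEval_bijective {O : Type*} [CommRing O] [IsNoetherianRing O] [IsLocalRing O]
    (p : ℕ) (hp : 0 < p) [CharP (O ⧸ IsLocalRing.maximalIdeal O) p]
    {Λ : Type*} [Group Λ] [Finite Λ] (hΛ : ¬ p ∣ Nat.card Λ)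
    {M : Type*} [AddCommGroup M] [Module (MonoidAlgebra O Λ) M]
    [Module O M] [IsScalarTower O (MonoidAlgebra O Λ) M]
    [Module.Finite O M] [Module.Free O M]
    {r : ℕ} (P : Fin r → Type*) [∀ i, AddCommGroup (P i)]
    [∀ i, Module (MonoidAlgebra O Λ) (P i)] [∀ i, Module O (P i)]
    [∀ i, IsScalarTower O (MonoidAlgebra O Λ) (P i)]
    [∀ i, Module.Finite O (P i)] [∀ i, Module.Free O (P i)]
    -- each reduction `P̄ᵢ` is simple (irreducible) ...
    (hsimple : ∀ i, IsSimpleModule (MonoidAlgebra O Λ)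
      ((P i) ⧸ ((IsLocalRing.maximalIdeal O).map (algebraMap O (MonoidAlgebra O Λ)) •
        (⊤ : Submodule (MonoidAlgebra O Λ) (P i)))))
    -- ... and absolutely irreducible: all its `k[Λ]`-endomorphisms are scalars
    (habs : ∀ i, ∀ f : ((P i) ⧸ ((IsLocalRing.maximalIdeal O).map
          (algebraMap O (MonoidAlgebra O Λ)) • (⊤ : Submodule (MonoidAlgebra O Λ) (P i))))
        →ₗ[MonoidAlgebra O Λ]
        ((P i) ⧸ ((IsLocalRing.maximalIdeal O).map (algebraMap O (MonoidAlgebra O Λ)) •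
          (⊤ : Submodule (MonoidAlgebra O Λ) (P i)))),
      ∃ c : O, ∀ x, f x = algebraMap O (MonoidAlgebra O Λ) c • x)
    -- the reductions are pairwise non-isomorphic
    (hdiff : ∀ i j, i ≠ j → IsEmpty
      (((P i) ⧸ ((IsLocalRing.maximalIdeal O).map (algebraMap O (MonoidAlgebra O Λ)) •
        (⊤ : Submodule (MonoidAlgebra O Λ) (P i)))) ≃ₗ[MonoidAlgebra O Λ]
       ((P j) ⧸ ((IsLocalRing.maximalIdeal O).map (algebraMap O (MonoidAlgebra O Λ)) •
        (⊤ : Submodule (MonoidAlgebra O Λ) (P j))))))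
    -- `M/𝔪M` is a direct sum of copies of the `P̄ᵢ`
    (hM : ∃ n : Fin r → ℕ, Nonempty
      ((M ⧸ ((IsLocalRing.maximalIdeal O).map (algebraMap O (MonoidAlgebra O Λ)) •
        (⊤ : Submodule (MonoidAlgebra O Λ) M))) ≃ₗ[MonoidAlgebra O Λ]
       (∀ i, Fin (n i) → ((P i) ⧸ ((IsLocalRing.maximalIdeal O).map
          (algebraMap O (MonoidAlgebra O Λ)) •
          (⊤ : Submodule (MonoidAlgebra O Λ) (P i))))))) :
    Function.Bijective (totalEval (O := O) (A := MonoidAlgebra O Λ) (M := M) P) ∧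
    ∀ (a : MonoidAlgebra O Λ) (x : ∀ i, (P i ⊗[O] (P i →ₗ[MonoidAlgebra O Λ] M))),
      totalEval (O := O) (A := MonoidAlgebra O Λ) (M := M) P (a • x) =
        a • totalEval (O := O) (A := MonoidAlgebra O Λ) (M := M) P x := by
  have hu : IsUnit (Nat.card Λ : O) := by
    by_contra h
    have h1 : (Nat.card Λ : O) ∈ IsLocalRing.maximalIdeal O := h
    rw [← Ideal.Quotient.eq_zero_iff_mem, map_natCast, CharP.cast_eq_zero_iff _ p] at h1
    exact hΛ h1
  obtain ⟨n, ⟨e⟩⟩ := hM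
  have := projective_of_card hu (P := M)
  have := fun i => projective_of_card hu (P := P i)
  have := projective_of_card hu (P := ∀ i, Fin (n i) → P i)
  exact ⟨main_aux P n hsimple habs hdiff e, totalEval_smul P⟩
end

section
/- Let k be a field of characteristic different from 2, let ε ∈ {+1, −1}, and let τ and W be nonzero finite-dimensional k-vector spaces. Suppose given bilinear forms ⟨·,·⟩_τ on τ and ⟨·,·⟩_W on W, both nondegenerate (perfect), such that the bilinear form B on τ ⊗_k W determined by B(v₁ ⊗ w₁, v₂ ⊗ w₂) = ⟨v₁, v₂⟩_τ · ⟨w₁, w₂⟩_W is ε-symmetric, i.e., B(x, y) = ε·B(y, x) for all x, y. Then there exist signs ε_τ, ε_W ∈ {+1, −1} with ε_τ · ε_W = ε such that ⟨v₁, v₂⟩_τ = ε_τ · ⟨v₂, v₁⟩_τ for all v₁, v₂ ∈ τ and ⟨w₁, w₂⟩_W = ε_W · ⟨w₂, w₁⟩_W for all w₁, w₂ ∈ W. -/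
open TensorProduct LinearMap

/-- Let `k` be a field of characteristic different from `2`, let `ε ∈ {+1, −1}`, and let
`τ` and `W` be nonzero finite-dimensional `k`-vector spaces.  Suppose given bilinear forms
`⟨·,·⟩_τ` on `τ` and `⟨·,·⟩_W` on `W`, both nondegenerate (perfect, i.e. the induced maps
to the dual spaces are bijective), such that the bilinear form `B` on `τ ⊗_k W` determined
by `B(v₁ ⊗ w₁, v₂ ⊗ w₂) = ⟨v₁, v₂⟩_τ · ⟨w₁, w₂⟩_W` is `ε`-symmetric.  Then there exist
signs `ε_τ, ε_W ∈ {+1, −1}` with `ε_τ · ε_W = ε` such that `⟨·,·⟩_τ` is `ε_τ`-symmetric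
and `⟨·,·⟩_W` is `ε_W`-symmetric. -/
theorem sign_symmetric_of_tensor_sign_symmetric {k : Type*} [Field k] (h2 : (2 : k) ≠ 0)
    (ε : k) (hε : ε = 1 ∨ ε = -1)
    {τ W : Type*} [AddCommGroup τ] [AddCommGroup W] [Module k τ] [Module k W]
    [FiniteDimensional k τ] [FiniteDimensional k W] [Nontrivial τ] [Nontrivial W]
    (Bτ : LinearMap.BilinForm k τ) (BW : LinearMap.BilinForm k W)
    (hBτ : Function.Bijective Bτ) (hBW : Function.Bijective BW)
    (hsym : ∀ x y : τ ⊗[k] W,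
      LinearMap.BilinForm.tmul Bτ BW x y = ε * LinearMap.BilinForm.tmul Bτ BW y x) :
    ∃ ετ εW : k, (ετ = 1 ∨ ετ = -1) ∧ (εW = 1 ∨ εW = -1) ∧ ετ * εW = ε ∧
      (∀ v₁ v₂ : τ, Bτ v₁ v₂ = ετ * Bτ v₂ v₁) ∧
      (∀ w₁ w₂ : W, BW w₁ w₂ = εW * BW w₂ w₁) := by
  have key : ∀ (v₁ v₂ : τ) (w₁ w₂ : W),
      Bτ v₁ v₂ * BW w₁ w₂ = ε * (Bτ v₂ v₁ * BW w₂ w₁) := by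
    intro v₁ v₂ w₁ w₂
    have h := hsym (v₁ ⊗ₜ w₁) (v₂ ⊗ₜ w₂)
    simp only [LinearMap.BilinForm.tmul, LinearMap.BilinForm.tensorDistrib_tmul,
      smul_eq_mul] at h
    linear_combination h
  have exτ : ∃ v₁ v₂ : τ, Bτ v₁ v₂ ≠ 0 := by
    by_contra! hc
    obtain ⟨v, hv⟩ := exists_ne (0 : τ)
    apply hv
    apply hBτ.1
    ext x
    simp [hc]
  have exW : ∃ w₁ w₂ : W, BW w₁ w₂ ≠ 0 := by
    by_contra! hc
    obtain ⟨v, hv⟩ := exists_ne (0 : W)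
    apply hv
    apply hBW.1
    ext x
    simp [hc]
  obtain ⟨a₁, a₂, ha⟩ := exτ
  obtain ⟨b₁, b₂, hb⟩ := exW
  obtain ⟨c, hc⟩ : ∃ c : k, ∀ v₁ v₂ : τ, Bτ v₁ v₂ = c * Bτ v₂ v₁ := by
    refine ⟨ε * BW b₂ b₁ / BW b₁ b₂, fun v₁ v₂ => ?_⟩
    have h := key v₁ v₂ b₁ b₂
    field_simp
    linear_combination h
  have hcc : c * c = 1 := by
    apply mul_right_cancel₀ ha
    linear_combination -hc a₁ a₂ - c * hc a₂ a₁
  have hεε : ε * ε = 1 := by rcases hε with h | h <;> simp [h]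
  refine ⟨c, ε * c, mul_self_eq_one_iff.mp hcc, mul_self_eq_one_iff.mp ?_, ?_, hc, ?_⟩
  · linear_combination c * c * hεε + hcc
  · linear_combination ε * hcc
  · intro w₁ w₂
    apply mul_left_cancel₀ ha
    linear_combination key a₁ a₂ w₁ w₂ + ε * BW w₂ w₁ * hc a₂ a₁
end

section
/- Let k be a field of characteristic p > 0 and Λ a finite group with p ∤ |Λ|. If V is a finite-dimensional absolutely irreducible representation of Λ over k, then p does not divide dim_k V. -/
/-- Let `k` be a field of characteristic `p > 0` and `Λ` a finite group with `p ∤ |Λ|`.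
If `V` is a finite-dimensional absolutely irreducible representation of `Λ` over `k`
(irreducible with all `k[Λ]`-endomorphisms scalar), then `p` does not divide `dim_k V`. -/
theorem not_dvd_finrank_of_absolutely_irreducible {k : Type*} [Field k]
    (p : ℕ) [CharP k p] (hp : 0 < p)
    {Λ : Type*} [Group Λ] [Finite Λ] (hΛ : ¬ p ∣ Nat.card Λ)
    {V : Type*} [AddCommGroup V] [Module (MonoidAlgebra k Λ) V] [Module k V]
    [IsScalarTower k (MonoidAlgebra k Λ) V] [FiniteDimensional k V]
    (hsimple : IsSimpleModule (MonoidAlgebra k Λ) V)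
    (habs : ∀ f : V →ₗ[MonoidAlgebra k Λ] V, ∃ c : k, ∀ x, f x = c • x) :
    ¬ p ∣ Module.finrank k V := by
  intro hdvd
  have := Fintype.ofFinite Λ
  have : Nontrivial V := IsSimpleModule.nontrivial (MonoidAlgebra k Λ) V
  obtain ⟨v, hv⟩ := exists_ne (0 : V)
  obtain ⟨φ, hφ⟩ : ∃ φ : Module.Dual k V, φ v ≠ 0 := by
    by_contra! h
    exact hv ((Module.forall_dual_apply_eq_zero_iff k v).1 h)
  let π : V →ₗ[k] V := φ.smulRight v
  have htr : LinearMap.trace k V π = φ v := LinearMap.trace_smulRight φ v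
  obtain ⟨c, hc⟩ := habs (π.sumOfConjugatesEquivariant Λ)
  have h1 : ∑ g : Λ, π.conjugate g = c • LinearMap.id := by
    ext x
    rw [LinearMap.sum_apply, ← LinearMap.sumOfConjugatesEquivariant_apply, hc]
    rfl
  have h2 : ∀ g : Λ, LinearMap.trace k V (π.conjugate g) = φ v := by
    intro g
    rw [LinearMap.conjugate, LinearMap.trace_comp_comm', LinearMap.comp_assoc, ← htr]
    congr 1
    ext x
    simp only [LinearMap.comp_apply, MonoidAlgebra.GroupSMul.linearMap_apply]
    rw [← mul_smul, MonoidAlgebra.single_mul_single, mul_one, mul_inv_cancel,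
      ← MonoidAlgebra.one_def, one_smul]
  have h3 := congrArg (LinearMap.trace k V) h1
  rw [map_sum, map_smul, LinearMap.trace_id, (CharP.cast_eq_zero_iff k p _).2 hdvd,
    smul_zero, Finset.sum_congr rfl (fun g _ => h2 g), Finset.sum_const, nsmul_eq_mul,
    Finset.card_univ, ← Nat.card_eq_fintype_card] at h3
  rcases mul_eq_zero.1 h3 with h | h
  · exact hΛ ((CharP.cast_eq_zero_iff k p _).1 h)
  · exact hφ h
end

section
/- Let O be a commutative Noetherian local ring with maximal ideal 𝔪 and residue field k of characteristic p > 0, and let Λ be a finite group with p ∤ |Λ|. Let M be a nonzero O[Λ]-module that is finite free as an O-module and whose reduction M/𝔪M is an absolutely irreducible k[Λ]-module. Then the natural map O → End_{O[Λ]}(M) given by scalar multiplication is an isomorphism. -/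
/-- The submodule `𝔪M` formed over the group algebra is contained in the one over `O`. -/
theorem aux_mem_smul {O : Type*} [CommRing O] {A : Type*} [Ring A] [Algebra O A]
    {M : Type*} [AddCommGroup M] [Module A M] [Module O M] [IsScalarTower O A M]
    (I : Ideal O) {x : M} (hx : x ∈ (I.map (algebraMap O A) • (⊤ : Submodule A M))) :
    x ∈ (I • (⊤ : Submodule O M)) := by
  have stab : ∀ (s : A) (y : M), y ∈ (I • (⊤ : Submodule O M)) →
      s • y ∈ (I • (⊤ : Submodule O M)) := by
    intro s y hy
    induction hy using Submodule.smul_induction_on' with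
    | smul r hr n hn =>
      rw [smul_comm]
      exact Submodule.smul_mem_smul hr trivial
    | add a ha b hb h1 h2 => rw [smul_add]; exact add_mem h1 h2
  refine Submodule.smul_induction_on hx ?_ (fun a b => add_mem)
  intro r hr n _
  refine Submodule.span_induction (p := fun r _ => r • n ∈ (I • (⊤ : Submodule O M)))
    ?_ ?_ ?_ ?_ hr
  · rintro _ ⟨a, ha, rfl⟩
    rw [algebraMap_smul]
    exact Submodule.smul_mem_smul ha trivial
  · simp
  · intro a b _ _ h1 h2
    rw [add_smul]; exact add_mem h1 h2
  · intro s a _ h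
    rw [smul_assoc]
    exact stab s _ h

/-- Let `O` be a commutative Noetherian local ring with maximal ideal `𝔪` and residue field
`k` of characteristic `p > 0`, and let `Λ` be a finite group with `p ∤ |Λ|`.  Let `M` be a
nonzero `O[Λ]`-module that is finite free as an `O`-module and whose reduction `M/𝔪M` is an
absolutely irreducible `k[Λ]`-module.  Then the natural map `O → End_{O[Λ]}(M)` given by
scalar multiplication is an isomorphism. -/
theorem scalar_to_end_bijective {O : Type*} [CommRing O] [IsNoetherianRing O] [IsLocalRing O]
    (p : ℕ) (hp : 0 < p) [CharP (O ⧸ IsLocalRing.maximalIdeal O) p]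
    {Λ : Type*} [Group Λ] [Finite Λ] (hΛ : ¬ p ∣ Nat.card Λ)
    {M : Type*} [AddCommGroup M] [Nontrivial M]
    [Module (MonoidAlgebra O Λ) M] [Module O M] [IsScalarTower O (MonoidAlgebra O Λ) M]
    [Module.Finite O M] [Module.Free O M]
    -- the reduction `M/𝔪M` is irreducible ...
    (hsimple : IsSimpleModule (MonoidAlgebra O Λ)
      (M ⧸ ((IsLocalRing.maximalIdeal O).map (algebraMap O (MonoidAlgebra O Λ)) •
        (⊤ : Submodule (MonoidAlgebra O Λ) M))))
    -- ... and absolutely irreducible: all its `k[Λ]`-endomorphisms are scalars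
    (habs : ∀ f : (M ⧸ ((IsLocalRing.maximalIdeal O).map (algebraMap O (MonoidAlgebra O Λ)) •
          (⊤ : Submodule (MonoidAlgebra O Λ) M)))
        →ₗ[MonoidAlgebra O Λ]
        (M ⧸ ((IsLocalRing.maximalIdeal O).map (algebraMap O (MonoidAlgebra O Λ)) •
          (⊤ : Submodule (MonoidAlgebra O Λ) M))),
      ∃ c : O, ∀ x, f x = algebraMap O (MonoidAlgebra O Λ) c • x) :
    Function.Bijective
      (fun c : O => (c • LinearMap.id : M →ₗ[MonoidAlgebra O Λ] M)) := by
  classical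
  haveI := Fintype.ofFinite Λ
  set 𝔪 := IsLocalRing.maximalIdeal O with h𝔪
  have hunit : IsUnit ((Fintype.card Λ : ℕ) : O) := by
    by_contra h
    have h1 : ((Fintype.card Λ : ℕ) : O) ∈ 𝔪 := (IsLocalRing.mem_maximalIdeal _).2 h
    rw [← Ideal.Quotient.eq_zero_iff_mem, map_natCast, CharP.cast_eq_zero_iff _ p] at h1
    exact hΛ (by rwa [Nat.card_eq_fintype_card])
  constructor
  · intro a b hab
    apply FaithfulSMul.eq_of_smul_eq_smul (α := M)
    intro m
    exact LinearMap.congr_fun hab m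
  -- averaging operator
  let e : (M →ₗ[O] M) →ₗ[O] (M →ₗ[MonoidAlgebra O Λ] M) :=
    { toFun := fun f => LinearMap.sumOfConjugatesEquivariant Λ f
      map_add' := fun f g => by
        ext x
        simp [LinearMap.sumOfConjugatesEquivariant_apply, LinearMap.conjugate_apply,
          Finset.sum_add_distrib]
      map_smul' := fun c f => by
        ext x
        simp only [LinearMap.sumOfConjugatesEquivariant_apply, LinearMap.conjugate_apply,
          Finset.smul_sum, LinearMap.smul_apply, RingHom.id_apply]
        exact Finset.sum_congr rfl fun g _ => smul_comm _ _ _ }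
  have he : ∀ g : M →ₗ[MonoidAlgebra O Λ] M,
      e (g.restrictScalars O) = (Fintype.card Λ : O) • g := by
    intro g
    ext x
    change LinearMap.sumOfConjugatesEquivariant Λ _ x = _
    rw [LinearMap.sumOfConjugatesEquivariant_apply]
    have : ∀ h : Λ, (g.restrictScalars O).conjugate h x = g x := by
      intro h
      rw [LinearMap.conjugate_apply, LinearMap.restrictScalars_apply, map_smul, ← mul_smul,
        MonoidAlgebra.single_mul_single, mul_one, inv_mul_cancel, ← MonoidAlgebra.one_def,
        one_smul]
    simp only [this, Finset.sum_const, Finset.card_univ, LinearMap.smul_apply,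
      Nat.cast_smul_eq_nsmul]
  have key : ∀ g : M →ₗ[MonoidAlgebra O Λ] M,
      (∀ x, g x ∈ (𝔪 • (⊤ : Submodule O M))) →
      g ∈ (𝔪 • (⊤ : Submodule O (M →ₗ[MonoidAlgebra O Λ] M))) := by
    intro g hg
    let b := Module.Free.chooseBasis O M
    have h1 : g.restrictScalars O = ∑ i, (b.coord i).smulRight (g (b i)) := by
      refine b.ext fun j => ?_
      simp [LinearMap.sum_apply, Finsupp.single_apply, ite_smul]
    have h2 : ∀ (i) (m : M), m ∈ (𝔪 • (⊤ : Submodule O M)) →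
        e ((b.coord i).smulRight m) ∈
          (𝔪 • (⊤ : Submodule O (M →ₗ[MonoidAlgebra O Λ] M))) := by
      intro i m hm
      induction hm using Submodule.smul_induction_on' with
      | smul r hr n hn =>
        have : (b.coord i).smulRight (r • n) = r • (b.coord i).smulRight n := by
          ext x
          simp only [LinearMap.smulRight_apply, LinearMap.smul_apply]
          exact smul_comm _ _ _
        rw [this, map_smul]
        exact Submodule.smul_mem_smul hr trivial
      | add x hx y hy h1 h2 =>
        have : (b.coord i).smulRight (x + y) =
            (b.coord i).smulRight x + (b.coord i).smulRight y := by
          ext x; simp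
        rw [this, map_add]
        exact add_mem h1 h2
    have h3 : (Fintype.card Λ : O) • g ∈
        (𝔪 • (⊤ : Submodule O (M →ₗ[MonoidAlgebra O Λ] M))) := by
      rw [← he, h1, map_sum]
      exact sum_mem fun i _ => h2 i _ (hg _)
    obtain ⟨u, hu⟩ := hunit
    rw [← hu] at h3
    have := Submodule.smul_mem _ (↑u⁻¹ : O) h3
    rwa [← mul_smul, Units.inv_mul, one_smul] at this
  -- finiteness of the endomorphism module
  haveI hfin : Module.Finite O (M →ₗ[MonoidAlgebra O Λ] M) := by
    let r : (M →ₗ[MonoidAlgebra O Λ] M) →ₗ[O] (M →ₗ[O] M) :=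
      { toFun := fun g => g.restrictScalars O
        map_add' := fun _ _ => rfl
        map_smul' := fun _ _ => rfl }
    exact Module.Finite.of_injective r (LinearMap.restrictScalars_injective O)
  have hnak : (⊤ : Submodule O (M →ₗ[MonoidAlgebra O Λ] M)) ≤
      Submodule.span O {LinearMap.id} := by
    refine Submodule.le_of_le_smul_of_le_jacobson_bot (I := 𝔪) hfin.fg_top
      (IsLocalRing.maximalIdeal_le_jacobson _) ?_
    intro f _
    have hf : ∀ x ∈ (𝔪.map (algebraMap O (MonoidAlgebra O Λ)) •
        (⊤ : Submodule (MonoidAlgebra O Λ) M)),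
        f x ∈ (𝔪.map (algebraMap O (MonoidAlgebra O Λ)) •
        (⊤ : Submodule (MonoidAlgebra O Λ) M)) := by
      intro x hx
      refine Submodule.smul_induction_on hx ?_ ?_
      · intro r hr n _
        rw [map_smul]
        exact Submodule.smul_mem_smul hr trivial
      · intro x y h1 h2
        rw [map_add]; exact add_mem h1 h2
    obtain ⟨c, hc⟩ := habs (Submodule.mapQ _ _ f hf)
    have hg : f - c • LinearMap.id ∈
        (𝔪 • (⊤ : Submodule O (M →ₗ[MonoidAlgebra O Λ] M))) := by
      apply key
      intro x
      apply aux_mem_smul (A := MonoidAlgebra O Λ)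
      have := hc (Submodule.Quotient.mk x)
      rw [Submodule.mapQ_apply, ← Submodule.Quotient.mk_smul, Submodule.Quotient.eq,
        algebraMap_smul] at this
      exact this
    rw [← add_sub_cancel (c • LinearMap.id) f]
    exact Submodule.add_mem_sup
      (Submodule.smul_mem _ _ (Submodule.mem_span_singleton_self _)) hg
  intro f
  obtain ⟨c, hc⟩ := Submodule.mem_span_singleton.1 (hnak (Submodule.mem_top (x := f)))
  exact ⟨c, hc⟩
end

section
/- Let R be a commutative ring containing elements i and s with i² = −1 and s² = 2, with 2 invertible in R. Let G ∈ Mat_m(R) be a symmetric invertible matrix that is a signed permutation matrix, i.e., each row of G has exactly one nonzero entry, and that entry equals 1 or −1. Then there exists P ∈ GL_m(R) with Pᵀ G P = J_m, where J_m is the antidiagonal identity matrix with (J_m)_{ij} = 1 if i + j = m + 1 and 0 otherwise. In other words, the symmetric bilinear form on R^m with Gram matrix G is equivalent over R to the standard symmetric pairing with Gram matrix J_m. -/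
open Matrix in
theorem signed_sq_eq_one {R : Type*} [CommRing R] {m : ℕ} (G : Matrix (Fin m) (Fin m) R)
    (hsymm : G.transpose = G)
    (hsigned : ∀ r : Fin m, ∃ c : Fin m,
      (G r c = 1 ∨ G r c = -1) ∧ ∀ c' : Fin m, c' ≠ c → G r c' = 0) :
    G * G = 1 := by
  have hs : ∀ a b, G a b = G b a := fun a b => congrFun (congrFun hsymm b) a
  ext r t
  obtain ⟨c, hc, hc0⟩ := hsigned r
  rw [Matrix.mul_apply, Finset.sum_eq_single c (fun b _ hb => by rw [hc0 b hb, zero_mul])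
    (fun h => absurd (Finset.mem_univ c) h)]
  by_cases hrt : r = t
  · subst hrt
    rw [hs c r, Matrix.one_apply_eq]
    rcases hc with h | h <;> rw [h] <;> ring
  · rw [Matrix.one_apply_ne hrt]
    obtain ⟨d, -, hd0⟩ := hsigned c
    by_cases hd : t = d
    · rw [hs r c, hd0 r (by rw [← hd]; exact hrt), zero_mul]
    · rw [hd0 t hd, mul_zero]

/-- A symmetric involution has a symmetric square root `(1+A)/2 + i (1-A)/2`. -/
theorem exists_symm_sqrt {R : Type*} [CommRing R] (i : R) (hi : i ^ 2 = -1)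
    (h2 : IsUnit (2 : R)) {m : ℕ} (A : Matrix (Fin m) (Fin m) R)
    (hA : A.transpose = A) (hA2 : A * A = 1) :
    ∃ Q : Matrix (Fin m) (Fin m) R, Q.transpose = Q ∧ Q * Q = A := by
  obtain ⟨u, hu⟩ := h2.exists_right_inv
  refine ⟨(u * (1 + i)) • (1 : Matrix (Fin m) (Fin m) R) + (u * (1 - i)) • A, ?_, ?_⟩
  · simp [hA]
  · have e1 : u * (1 + i) * (u * (1 + i)) + u * (1 - i) * (u * (1 - i)) = 0 := by
      linear_combination 2 * u ^ 2 * hi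
    have e2 : u * (1 + i) * (u * (1 - i)) + u * (1 - i) * (u * (1 + i)) = 1 := by
      linear_combination (-2) * u ^ 2 * hi + (2 * u + 1) * hu
    calc _ = (u * (1 + i) * (u * (1 + i)) + u * (1 - i) * (u * (1 - i))) •
          (1 : Matrix (Fin m) (Fin m) R) +
          (u * (1 + i) * (u * (1 - i)) + u * (1 - i) * (u * (1 + i))) • A := by
          simp only [add_mul, mul_add, smul_mul_assoc, mul_smul_comm, hA2, one_mul, mul_one,
            smul_smul]
          module
      _ = A := by rw [e1, e2]; simp

/-- Let `R` be a commutative ring containing elements `i` and `s` with `i² = −1` and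
`s² = 2`, with `2` invertible in `R`.  Let `G ∈ Mat_m(R)` be a symmetric invertible matrix
that is a signed permutation matrix, i.e. each row of `G` has exactly one nonzero entry,
and that entry equals `1` or `−1`.  Then there exists `P ∈ GL_m(R)` with `Pᵀ G P = J_m`,
where `J_m` is the antidiagonal identity matrix: the symmetric bilinear form with Gram
matrix `G` is equivalent over `R` to the standard symmetric pairing. -/
theorem symm_signed_perm_equiv_standard {R : Type*} [CommRing R]
    (i s : R) (hi : i ^ 2 = -1) (hs : s ^ 2 = 2) (h2 : IsUnit (2 : R))
    {m : ℕ} (G : Matrix (Fin m) (Fin m) R)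
    (hsymm : G.transpose = G) (hGunit : IsUnit G)
    (hsigned : ∀ r : Fin m, ∃ c : Fin m,
      (G r c = 1 ∨ G r c = -1) ∧ ∀ c' : Fin m, c' ≠ c → G r c' = 0) :
    ∃ P : Matrix (Fin m) (Fin m) R, IsUnit P ∧
      P.transpose * G * P =
        Matrix.of (fun a b : Fin m => if (a : ℕ) + (b : ℕ) + 1 = m then (1 : R) else 0) := by
  have hG2 := signed_sq_eq_one G hsymm hsigned
  set J : Matrix (Fin m) (Fin m) R :=
    Matrix.of (fun a b : Fin m => if (a : ℕ) + (b : ℕ) + 1 = m then (1 : R) else 0) with hJdef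
  have hJ : J.transpose = J := by
    ext a b
    simp [hJdef, add_comm (a : ℕ)]
  have hJ2 : J * J = 1 := by
    refine signed_sq_eq_one J hJ fun r => ⟨Fin.rev r, Or.inl ?_, fun c hc => ?_⟩
    · have := r.2
      simp only [hJdef, Matrix.of_apply, Fin.val_rev]
      exact if_pos (by omega)
    · simp only [hJdef, Matrix.of_apply]
      refine if_neg fun h => hc (Fin.ext ?_)
      rw [Fin.val_rev]
      omega
  obtain ⟨Q, hQ, hQG⟩ := exists_symm_sqrt i hi h2 G hsymm hG2
  obtain ⟨S, hS, hSJ⟩ := exists_symm_sqrt i hi h2 J hJ hJ2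
  have hcomm : G * Q = Q * G := by rw [← hQG, mul_assoc]
  have hkey : G * Q * G * (Q * G) = 1 := by
    rw [hcomm, mul_assoc Q, hG2, mul_one, ← mul_assoc, hQG, hG2]
  refine ⟨Q * G * S, ?_, ?_⟩
  · have uG : IsUnit (Q * G) := by
      refine IsUnit.of_mul_eq_one (G * Q * G) (mul_eq_one_comm.mp hkey)
    have uS : IsUnit S := by
      refine IsUnit.of_mul_eq_one (S * J) ?_
      rw [← mul_assoc, hSJ, hJ2]
    exact uG.mul uS
  · rw [Matrix.transpose_mul, Matrix.transpose_mul, hS, hQ, hsymm]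
    calc S * (G * Q) * G * (Q * G * S) = S * (G * Q * G * (Q * G)) * S := by
          simp only [mul_assoc]
      _ = J := by rw [hkey, mul_one, hSJ]
end

section
/- Let R be a commutative ring and let m = 2n be even. Let G ∈ Mat_m(R) be an invertible alternating matrix (Gᵀ = −G with zero diagonal) that is a signed permutation matrix, i.e., each row of G has exactly one nonzero entry, and that entry equals 1 or −1. Then there exists P ∈ GL_m(R) with Pᵀ G P = Ω_m, where Ω_m is the standard symplectic Gram matrix given in n×n blocks by Ω_m = [[0, J_n], [−J_n, 0]] with J_n the antidiagonal identity matrix. -/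
/-- Let `R` be a commutative ring and let `m = 2n` be even.  Let `G ∈ Mat_m(R)` be an
invertible alternating matrix (`Gᵀ = −G` with zero diagonal) that is a signed permutation
matrix, i.e. each row of `G` has exactly one nonzero entry, and that entry equals `1` or
`−1`.  Then there exists `P ∈ GL_m(R)` with `Pᵀ G P = Ω_m`, where `Ω_m` is the standard
symplectic Gram matrix given in `n×n` blocks by `Ω_m = [[0, J_n], [−J_n, 0]]` with `J_n`
the antidiagonal identity matrix. -/
theorem alt_signed_perm_equiv_standard {R : Type*} [CommRing R] {n : ℕ}
    (G : Matrix (Fin (2 * n)) (Fin (2 * n)) R)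
    (halt : G.transpose = -G) (hdiag : ∀ a, G a a = 0) (hGunit : IsUnit G)
    (hsigned : ∀ r : Fin (2 * n), ∃ c : Fin (2 * n),
      (G r c = 1 ∨ G r c = -1) ∧ ∀ c' : Fin (2 * n), c' ≠ c → G r c' = 0) :
    ∃ P : Matrix (Fin (2 * n)) (Fin (2 * n)) R, IsUnit P ∧
      P.transpose * G * P =
        Matrix.of (fun a b : Fin (2 * n) =>
          if (a : ℕ) + (b : ℕ) + 1 = 2 * n then (if (a : ℕ) < n then (1 : R) else -1)
          else 0) := by
  classical
  rcases subsingleton_or_nontrivial R with hR | hR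
  · exact ⟨1, isUnit_one, Subsingleton.elim _ _⟩
  choose τ hτ hτ0 using hsigned
  have hne : ∀ r, G r (τ r) ≠ 0 := by
    intro r h
    rcases hτ r with h1 | h1 <;> rw [h] at h1
    · exact zero_ne_one h1
    · have : (1 : R) = 0 := by linear_combination h1
      exact one_ne_zero this
  have hanti : ∀ a b, G a b = - G b a := by
    intro a b
    have := congrFun (congrFun halt b) a
    simpa using this
  have hinv : ∀ r, τ (τ r) = r := by
    intro r
    by_contra hc
    have h1 := hτ0 (τ r) r (fun h => hc h.symm)
    rw [hanti] at h1
    exact hne r (neg_eq_zero.mp h1)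
  have hfix : ∀ r, τ r ≠ r := by
    intro r h
    have h1 := hne r
    rw [h] at h1
    exact h1 (hdiag r)
  have hsq : ∀ r, G r (τ r) * G r (τ r) = 1 := by
    intro r
    rcases hτ r with h1 | h1 <;> rw [h1] <;> ring
  let S : Finset (Fin (2 * n)) := Finset.univ.filter (fun r => r < τ r)
  have hS : S.card = n := by
    have h1 : (Finset.univ.filter (fun r => r < τ r)).card
        = (Finset.univ.filter (fun r => ¬ r < τ r)).card := by
      refine Finset.card_bij (fun r _ => τ r) ?_ ?_ ?_
      · intro r hr
        simp only [Finset.mem_filter, Finset.mem_univ, true_and] at hr ⊢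
        rw [hinv]
        exact not_lt.mpr hr.le
      · intro a _ b _ hab
        have := congrArg τ hab
        simpa [hinv] using this
      · intro b hb
        simp only [Finset.mem_filter, Finset.mem_univ, true_and] at hb
        refine ⟨τ b, ?_, hinv b⟩
        simp only [Finset.mem_filter, Finset.mem_univ, true_and]
        rw [hinv]
        exact lt_of_le_of_ne (not_lt.mp hb) (hfix b)
    have h2 := Finset.card_filter_add_card_filter_not (s := (Finset.univ : Finset (Fin (2 * n))))
      (fun r => r < τ r)
    rw [← h1] at h2
    simp only [Finset.card_univ, Fintype.card_fin] at h2
    change (Finset.univ.filter (fun r => r < τ r)).card = n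
    omega
  let e : Fin n ≃o S := S.orderIsoOfFin hS
  have hmem : ∀ i : Fin n, (e i : Fin (2 * n)) < τ (e i) := by
    intro i
    have := (e i).2
    exact (Finset.mem_filter.mp this).2
  have einj : ∀ i j : Fin n, (e i : Fin (2 * n)) = e j → i = j := by
    intro i j h
    exact e.injective (Subtype.ext h)
  let f : Fin (2 * n) → Fin (2 * n) := fun a =>
    if h : (a : ℕ) < n then (e ⟨a, h⟩ : Fin (2 * n))
    else τ (e ⟨2 * n - 1 - a, by have := a.2; omega⟩)
  have hτinj : ∀ a b, τ a = τ b → a = b := by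
    intro a b hab
    have := congrArg τ hab
    simpa [hinv] using this
  have hmix : ∀ i j : Fin n, (e i : Fin (2 * n)) ≠ τ (e j) := by
    intro i j h
    have h1 := hmem i
    rw [h, hinv] at h1
    exact absurd (hmem j) (not_lt.mpr h1.le)
  have finj : ∀ a b, f a = f b → a = b := by
    intro a b hab
    have ha := a.2
    have hb := b.2
    simp only [f] at hab
    split_ifs at hab with h1 h2 h2
    · have := congrArg Fin.val (einj _ _ hab)
      exact Fin.ext this
    · exact absurd hab (hmix _ _)
    · exact absurd hab.symm (hmix _ _)
    · have := congrArg Fin.val (einj _ _ (hτinj _ _ hab))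
      simp only at this
      apply Fin.ext
      omega
  have frev : ∀ a b : Fin (2 * n), (a : ℕ) + b + 1 = 2 * n → f b = τ (f a) := by
    intro a b hab
    by_cases h : (a : ℕ) < n
    · have hb : ¬ (b : ℕ) < n := by omega
      have hi : 2 * n - 1 - (b : ℕ) = a := by omega
      simp [f, h, hb, hi]
    · have hb : (b : ℕ) < n := by omega
      have hi : 2 * n - 1 - (a : ℕ) = b := by omega
      simp [f, h, hb, hi, hinv]
  let ε : Fin (2 * n) → R := fun a => if (a : ℕ) < n then G (f a) (τ (f a)) else 1
  have hε : ∀ a, ε a * ε a = 1 := by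
    intro a
    simp only [ε]
    split_ifs
    · exact hsq _
    · ring
  let P : Matrix (Fin (2 * n)) (Fin (2 * n)) R := Matrix.of fun i a => if i = f a then ε a else 0
  have hPP : P.transpose * P = 1 := by
    ext a b
    simp only [P, Matrix.mul_apply, Matrix.transpose_apply, Matrix.of_apply, ite_mul, zero_mul,
      Finset.sum_ite_eq', Finset.mem_univ, if_true, Matrix.one_apply]
    by_cases hab : a = b
    · subst hab
      simp [hε]
    · have : f a ≠ f b := fun h => hab (finj _ _ h)
      simp [hab, this]
  refine ⟨P, ?_, ?_⟩
  · exact IsUnit.of_mul_eq_one _ (mul_eq_one_comm.mp hPP)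
  ext a b
  have hent : (P.transpose * G * P) a b = ε a * G (f a) (f b) * ε b := by
    simp only [P, Matrix.mul_apply, Matrix.transpose_apply, Matrix.of_apply, ite_mul, mul_ite,
      mul_zero, zero_mul, Finset.sum_ite_eq', Finset.mem_univ, if_true]
  rw [hent, Matrix.of_apply]
  by_cases hab : (a : ℕ) + b + 1 = 2 * n
  · have hfb := frev a b hab
    rw [if_pos hab]
    by_cases h : (a : ℕ) < n
    · have hb : ¬ (b : ℕ) < n := by omega
      simp [ε, h, hb, hfb, hsq]
    · have hb : (b : ℕ) < n := by omega
      have h1 := hanti (f a) (τ (f a))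
      have h2 := hsq (f a)
      simp only [ε, h, hb, hfb, hinv, if_true, if_false]
      rw [h1] at h2 ⊢
      linear_combination -h2
  · rw [if_neg hab]
    have hb : f b ≠ τ (f a) := by
      intro h
      have ha := a.2
      have h1 := frev a ⟨2 * n - 1 - a, by omega⟩ (by simp only; omega)
      have h2 := congrArg Fin.val (finj _ _ (h.trans h1.symm))
      simp only at h2
      omega
    rw [hτ0 _ _ hb]
    ring
end
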